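/- Let k be an algebraically closed field whose characteristic is either 0 or greater than d^n. Let F_0, …, F_m ∈ k[X_0, …, X_n] be homogeneous polynomials of common degree d, with F_0 not identically zero, and fix i ∈ {0, …, min(m,n)}. Then there exist a nonzero polynomial F in the (n−i)(n+1) + i(m+1) variables L = (L_{j,t})_{1≤j≤n−i, 0≤t≤n} and L̂ = (L̂_{j,t})_{1≤j≤i, 0≤t≤m}, of total degree at most (m+n+1)·2^n·(d+1)^{m+1}, and a non-negative integer g_i, such that for every choice of scalars ℓ ∈ k^{(n−i)×(n+1)} and ℓ̂ ∈ k^{i×(m+1)} with F(ℓ, ℓ̂) ≠ 0, the set of points x ∈ ℙ^n(k) satisfying ℓ_{j,0}x_0 + ⋯ + ℓ_{j,n}x_n = 0 for j = 1, …, n−i, ℓ̂_{j,0}F_0(x) + ⋯ + ℓ̂_{j,m}F_m(x) = 0 for j = 1, …, i, and x ∉ V(F_0, …, F_m), is finite with exactly g_i elements, and moreover every such point x satisfies x_0 ≠ 0. -/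

import Mathlib

section CountingLemma
open Finset

def cntW (n : ℕ) (D : Fin n → ℕ) (X : ℕ) : Finset (Fin n → ℕ) :=
  (Fintype.piFinset (fun _ : Fin n => range (X + 1))).filter (fun α => ∑ l, D l * α l ≤ X)

lemma cntW_card_le (n : ℕ) (D : Fin n → ℕ) (X : ℕ) : (cntW n D X).card ≤ (X + 1) ^ n := by
  refine (card_filter_le _ _).trans ?_
  simp

lemma mem_cntW {n : ℕ} {D : Fin n → ℕ} (hD : ∀ l, 1 ≤ D l) {X : ℕ} {α : Fin n → ℕ} :
    α ∈ cntW n D X ↔ ∑ l, D l * α l ≤ X := by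
  unfold cntW
  rw [mem_filter, and_iff_right_iff_imp]
  intro h
  rw [Fintype.mem_piFinset]
  intro l
  rw [mem_range, Nat.lt_succ_iff]
  refine le_trans ?_ h
  refine le_trans (Nat.le_mul_of_pos_left _ (hD l)) ?_
  exact Finset.single_le_sum (f := fun l => D l * α l) (fun _ _ => Nat.zero_le _) (mem_univ l)

lemma cntW_compare (n : ℕ) (D : Fin n → ℕ) (hD : ∀ l, 1 ≤ D l) (X : ℕ) :
    (cntW n (fun _ => 1) X).card ≤ (cntW n D X).card * ∏ l, D l := by
  have : (∏ l, D l) = (Fintype.piFinset (fun l : Fin n => range (D l))).card := by simp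
  rw [this, ← card_product]
  refine card_le_card_of_injOn (fun β => (fun l => β l / D l, fun l => β l % D l)) ?_ ?_
  · intro β hβ
    have hβ' := (mem_cntW (D := fun _ => 1) (fun _ => le_rfl)).1 (Finset.mem_coe.1 hβ)
    simp only [coe_product, Set.mem_prod, mem_coe]
    refine ⟨(mem_cntW hD).2 ?_, ?_⟩
    · refine le_trans (Finset.sum_le_sum fun l _ => ?_) hβ'
      simpa using Nat.mul_div_le (β l) (D l)
    · rw [Fintype.mem_piFinset]
      intro l
      rw [mem_range]
      exact Nat.mod_lt _ (hD l)
  · intro β _ γ _ h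
    simp only [Prod.mk.injEq] at h
    funext l
    rw [← Nat.div_add_mod (β l) (D l), ← Nat.div_add_mod (γ l) (D l), congrFun h.1 l, congrFun h.2 l]

lemma growth (n δ c : ℕ) (hδ : 1 ≤ δ) (W : ℕ → ℕ) (hW : ∀ X, W X ≤ (X + 1) ^ n) (hW1 : 1 ≤ W 0) :
    ∃ X, δ * W (X + c) < (δ + 1) * W X := by
  by_contra! hcon
  have hδ' : (0 : ℝ) < δ := by exact_mod_cast hδ
  set r : ℝ := (δ + 1) / δ with hr
  have hr1 : 1 < r := by rw [hr, lt_div_iff₀ hδ']; linarith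
  have h1 : ∀ t : ℕ, r ^ t ≤ W (t * c) := by
    intro t
    induction t with
    | zero => simpa using (by exact_mod_cast hW1 : (1 : ℝ) ≤ W 0)
    | succ t ih =>
      have h2 : ((δ + 1 : ℕ) : ℝ) * W (t * c) ≤ δ * W (t * c + c) := by exact_mod_cast hcon (t * c)
      rw [Nat.succ_mul, pow_succ]
      have : r * W (t * c) ≤ W (t * c + c) := by
        rw [hr, div_mul_eq_mul_div, div_le_iff₀ hδ']
        push_cast at h2
        linarith
      nlinarith [this, ih]
  have h2 := tendsto_pow_const_div_const_pow_of_one_lt n hr1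
  have h3 : ∀ᶠ t : ℕ in Filter.atTop, (t : ℝ) ^ n / r ^ t < 1 / (c + 1 : ℝ) ^ n :=
    h2.eventually (gt_mem_nhds (by positivity))
  obtain ⟨t, ht, ht1⟩ := (h3.and (Filter.eventually_ge_atTop 1)).exists
  have hrt : 0 < r ^ t := by positivity
  have h4 : (W (t * c) : ℝ) ≤ (t : ℝ) ^ n * (c + 1 : ℝ) ^ n := by
    rw [← mul_pow]
    have : (t * c + 1) ^ n ≤ (t * (c + 1)) ^ n := Nat.pow_le_pow_left (by nlinarith) _
    exact_mod_cast (hW (t * c)).trans this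
  rw [div_lt_div_iff₀ hrt (by positivity)] at ht
  linarith [h1 t]

open MvPolynomial in
theorem counting {A : Type*} [CommRing A] [Nontrivial A] (n : ℕ) (D : Fin n → ℕ)
    (hD : ∀ l, 1 ≤ D l) (f : Fin n → MvPolynomial (Fin n) A) (hf : ∀ l, (f l).totalDegree ≤ D l)
    (e : ℕ) (u v : MvPolynomial (Fin n) A) (hu : u.totalDegree ≤ e) (hv : v.totalDegree ≤ e) :
    ∃ r : Polynomial (MvPolynomial (Fin n) A), r ≠ 0 ∧ r.natDegree ≤ ∏ l, D l ∧
      ∑ κ ∈ range (∏ l, D l + 1), aeval f (r.coeff κ) * u ^ κ * v ^ (∏ l, D l - κ) = 0 := by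
  classical
  set δ := ∏ l, D l with hδ
  have hδ1 : 1 ≤ δ := Nat.one_le_iff_ne_zero.2 (Finset.prod_ne_zero_iff.2 fun l _ => by
    have := hD l; omega)
  obtain ⟨X, hX⟩ := growth n δ (e * δ) hδ1 (fun X => (cntW n (fun _ => 1) X).card)
    (fun X => cntW_card_le _ _ _) (by
      refine Finset.card_pos.2 ⟨0, (mem_cntW (fun _ => le_rfl)).2 (by simp)⟩)
  have hX' : (cntW n (fun _ => 1) (X + e * δ)).card < (δ + 1) * (cntW n D X).card := by
    have := cntW_compare n D hD X
    rw [← hδ] at this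
    have h2 : δ * (cntW n (fun _ => 1) (X + e * δ)).card < δ * ((δ + 1) * (cntW n D X).card) :=
      lt_of_lt_of_le hX (by nlinarith)
    exact lt_of_mul_lt_mul_left h2 (Nat.zero_le _)
  let w : Fin (δ + 1) × cntW n D X → MvPolynomial (Fin n) A := fun i =>
    (∏ l, f l ^ (i.2.1 l)) * u ^ (i.1 : ℕ) * v ^ (δ - (i.1 : ℕ))
  have hw : ∀ i, (w i).totalDegree ≤ X + e * δ := by
    rintro ⟨κ, α, hα⟩
    rw [mem_cntW hD] at hα
    refine (totalDegree_mul _ _).trans ?_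
    have h1 : (∏ l, f l ^ (α l)).totalDegree ≤ X := by
      refine (totalDegree_finsetProd _ _).trans (le_trans (Finset.sum_le_sum fun l _ => ?_) hα)
      refine (totalDegree_pow _ _).trans ?_
      rw [mul_comm]
      exact Nat.mul_le_mul_right _ (hf l)
    have h2 : (u ^ (κ : ℕ)).totalDegree ≤ κ * e :=
      (totalDegree_pow _ _).trans (Nat.mul_le_mul_left _ hu)
    have h3 : (v ^ (δ - (κ : ℕ))).totalDegree ≤ (δ - κ) * e :=
      (totalDegree_pow _ _).trans (Nat.mul_le_mul_left _ hv)
    have h4 : (κ : ℕ) * e + (δ - κ) * e = e * δ := by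
      rw [← add_mul, Nat.add_sub_cancel' (Nat.lt_succ_iff.1 κ.2), mul_comm]
    have h5 := totalDegree_mul (∏ l, f l ^ (α l)) (u ^ (κ : ℕ))
    dsimp only at h5 ⊢
    omega
  let T : ((Fin (δ + 1) × cntW n D X) → A) →ₗ[A] (cntW n (fun _ => 1) (X + e * δ) → A) :=
    { toFun := fun a β => ∑ i, a i * coeff (Finsupp.equivFunOnFinite.symm β.1) (w i)
      map_add' := by
        intro a b; funext β; simp [add_mul, Finset.sum_add_distrib]
      map_smul' := by
        intro a b; funext β; simp [Finset.mul_sum, mul_assoc] }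
  have hT : ¬ Function.Injective T := by
    intro hinj
    have := card_le_of_injective A T hinj
    simp only [Fintype.card_prod, Fintype.card_fin, Fintype.card_coe] at this
    omega
  obtain ⟨a, ha0, ha⟩ : ∃ a, T a = 0 ∧ a ≠ 0 := by
    by_contra! hcon
    exact hT ((injective_iff_map_eq_zero T).2 hcon)
  have hsum : ∑ i, C (a i) * w i = 0 := by
    ext β
    rw [coeff_sum, coeff_zero]
    simp only [coeff_C_mul]
    by_cases hβ : ∑ l, β l ≤ X + e * δ
    · have := congrFun ha0 ⟨fun l => β l, (mem_cntW (fun _ => le_rfl)).2 (by simpa using hβ)⟩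
      have hb : Finsupp.equivFunOnFinite.symm (fun l => β l) = β := by ext; simp
      simpa [T, hb] using this
    · refine Finset.sum_eq_zero fun i _ => ?_
      rw [coeff_eq_zero_of_totalDegree_lt, mul_zero]
      refine lt_of_le_of_lt (hw i) ?_
      push Not at hβ
      refine lt_of_lt_of_le hβ (le_of_eq ?_)
      symm
      exact Finset.sum_subset (Finset.subset_univ _) (by simp)
  let ex : (Fin n → ℕ) → (Fin n →₀ ℕ) := fun α => Finsupp.equivFunOnFinite.symm α
  let rc : Fin (δ + 1) → MvPolynomial (Fin n) A := fun κ =>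
    ∑ α : cntW n D X, monomial (ex α.1) (a (κ, α))
  let r : Polynomial (MvPolynomial (Fin n) A) := ∑ κ : Fin (δ + 1), Polynomial.monomial κ (rc κ)
  have hrc : ∀ κ : Fin (δ + 1), r.coeff κ = rc κ := by
    intro κ
    simp only [r, Polynomial.finsetSum_coeff, Polynomial.coeff_monomial]
    rw [Finset.sum_eq_single κ]
    · simp
    · intro b _ hb
      rw [if_neg]
      exact fun h => hb (Fin.ext h)
    · simp
  refine ⟨r, ?_, ?_, ?_⟩
  · intro h0
    apply ha
    funext i
    obtain ⟨κ, α⟩ := i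
    have h1 := hrc κ
    rw [h0, Polynomial.coeff_zero] at h1
    have h2 := congrArg (coeff (ex α.1)) h1
    simp only [rc, coeff_zero, coeff_sum, coeff_monomial] at h2
    rw [Finset.sum_eq_single α] at h2
    · simpa using h2.symm
    · intro b _ hb
      rw [if_neg]
      intro h
      exact hb (Subtype.ext (Finsupp.equivFunOnFinite.symm.injective h))
    · simp
  · refine Polynomial.natDegree_sum_le_of_forall_le _ _ fun κ _ => ?_
    exact (Polynomial.natDegree_monomial_le _).trans (Nat.lt_succ_iff.1 κ.2)
  · rw [Finset.sum_range, ← hsum, Fintype.sum_prod_type]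
    refine Finset.sum_congr rfl fun κ _ => ?_
    rw [hrc κ]
    simp only [rc, map_sum, Finset.sum_mul]
    refine Finset.sum_congr rfl fun α _ => ?_
    simp only [aeval_monomial, w]
    rw [Finsupp.prod_fintype _ _ (by simp)]
    simp [ex, mul_assoc, algebraMap_eq]

end CountingLemma

section LowestOrder
open MvPolynomial

theorem lowest_order {Q E C : Type*} [CommRing Q] [CommRing E] (ψ : Q →+* E)
    (Ψ : Q →+* MvPolynomial C E) (h : ∀ q, constantCoeff (Ψ q) = ψ q)
    (r : MvPolynomial C Q) (hr : r ≠ 0) (h0 : eval₂ Ψ X r = 0) :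
    ∃ α, coeff α r ≠ 0 ∧ ψ (coeff α r) = 0 := by
  classical
  obtain ⟨α, hα, hmin⟩ := r.support.exists_min_image (fun a => a.degree)
    (Finset.nonempty_iff_ne_empty.2 (by rwa [Ne, support_eq_empty]))
  refine ⟨α, mem_support_iff.1 hα, ?_⟩
  have h1 := congrArg (coeff α) h0
  rw [eval₂_eq, coeff_sum, coeff_zero, Finset.sum_eq_single α] at h1
  · have h2 : (∏ i ∈ α.support, (X i : MvPolynomial C E) ^ α i) = monomial α 1 := by
      rw [monomial_eq]; simp [Finsupp.prod]
    rw [h2, coeff_mul_monomial', if_pos le_rfl, tsub_self, mul_one] at h1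
    rw [← h, constantCoeff_eq, h1]
  · intro β hβ hne
    have h2 : (∏ i ∈ β.support, (X i : MvPolynomial C E) ^ β i) = monomial β 1 := by
      rw [monomial_eq]; simp [Finsupp.prod]
    rw [h2, coeff_mul_monomial', if_neg]
    intro hle
    apply hne
    have h3 := hmin β hβ
    have h4 : α = β + (α - β) := (add_tsub_cancel_of_le hle).symm
    have h5 : α.degree = β.degree + (α - β).degree := by
      conv_lhs => rw [h4]
      exact map_add _ _ _
    have h6 : α - β = 0 := (Finsupp.degree_eq_zero_iff _).1 (by omega)
    rw [h4, h6, add_zero]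
  · intro h'; exact absurd hα h'
end LowestOrder

section PrincipalPrime

theorem principal_poly {A : Type*} [CommRing A] [IsDomain A] [UniqueFactorizationMonoid A]
    (I : Ideal (Polynomial A)) (hI : I.IsPrime) (hne : I ≠ ⊥)
    (hc : ∀ a : A, Polynomial.C a ∈ I → a = 0) :
    ∃ q ∈ I, q ≠ 0 ∧ ∀ f ∈ I, q ∣ f := by
  classical
  obtain ⟨q, hq, hqp⟩ := hI.exists_mem_prime_of_ne_bot hne
  refine ⟨q, hq, hqp.ne_zero, fun f hf => ?_⟩
  have hdeg : q.natDegree ≠ 0 := by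
    intro h0
    rw [Polynomial.eq_C_of_natDegree_eq_zero h0] at hq hqp
    have := hc _ hq
    rw [this] at hqp
    exact hqp.ne_zero (by simp)
  have hprim := hqp.irreducible.isPrimitive hdeg
  let K := FractionRing A
  let _ : NormalizedGCDMonoid A := Classical.choice inferInstance
  have hirr := (hprim.irreducible_iff_irreducible_map_fraction_map (K := K)).1 hqp.irreducible
  rw [hprim.dvd_iff_fraction_map_dvd_fraction_map K]
  by_contra hnd
  obtain ⟨a, b, hab⟩ := hirr.coprime_iff_not_dvd.2 hnd
  obtain ⟨s, hs, hs'⟩ := IsLocalization.integerNormalization_spec (nonZeroDivisors A) a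
  obtain ⟨t, ht, ht'⟩ := IsLocalization.integerNormalization_spec (nonZeroDivisors A) b
  set a' := IsLocalization.integerNormalization (nonZeroDivisors A) a
  set b' := IsLocalization.integerNormalization (nonZeroDivisors A) b
  have key : Polynomial.C t * a' * q + Polynomial.C s * b' * f = Polynomial.C (s * t) := by
    apply Polynomial.map_injective (algebraMap A K) (IsFractionRing.injective A K)
    simp only [Polynomial.map_add, Polynomial.map_mul, Polynomial.map_C, hs', ht', map_mul]
    rw [← algebraMap_smul K s a, ← algebraMap_smul K t b, Polynomial.smul_eq_C_mul,
      Polynomial.smul_eq_C_mul]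
    linear_combination (Polynomial.C (algebraMap A K s) * Polynomial.C (algebraMap A K t)) * hab
  have hmem : Polynomial.C (s * t) ∈ I := by
    rw [← key]
    exact I.add_mem (I.mul_mem_left _ hq) (I.mul_mem_left _ hf)
  exact mul_ne_zero (nonZeroDivisors.ne_zero hs) (nonZeroDivisors.ne_zero ht) (hc _ hmem)

open MvPolynomial in
theorem principal_mv {k σ : Type*} [Field k] [DecidableEq σ] (v0 : σ)
    (I : Ideal (MvPolynomial σ k)) (hI : I.IsPrime) (hne : I ≠ ⊥)
    (hc : ∀ a : MvPolynomial {v // v ≠ v0} k, rename Subtype.val a ∈ I → a = 0) :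
    ∃ q ∈ I, q ≠ 0 ∧ ∀ f ∈ I, q ∣ f := by
  let E : MvPolynomial σ k ≃ₐ[k] Polynomial (MvPolynomial {v // v ≠ v0} k) :=
    (renameEquiv k (Equiv.optionSubtypeNe v0).symm).trans (optionEquivLeft k _)
  have hE : ∀ a, E.symm (Polynomial.C a) = rename Subtype.val a := by
    intro a
    rw [AlgEquiv.symm_apply_eq]
    simp only [E, AlgEquiv.trans_apply]
    induction a using MvPolynomial.induction_on with
    | C a => simp
    | add p q hp hq => simp only [map_add, hp, hq]
    | mul_X p v hp =>
      simp only [map_mul, hp, rename_X]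
      simp [v.2]
  obtain ⟨q, hq, hq0, hqd⟩ := principal_poly (I.comap E.symm.toRingHom)
    (Ideal.comap_isPrime _ _) (by
      intro h
      apply hne
      rw [eq_bot_iff]
      intro x hx
      have : E x ∈ I.comap E.symm.toRingHom := by
        rw [Ideal.mem_comap]; simpa using hx
      rw [h, Ideal.mem_bot] at this
      simpa using this)
    (by
      intro a ha
      rw [Ideal.mem_comap] at ha
      apply hc
      rw [← hE]; exact ha)
  refine ⟨E.symm q, hq, by simpa using hq0, fun f hf => ?_⟩
  have := map_dvd E.symm (hqd (E f) (by rw [Ideal.mem_comap]; simpa using hf))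
  simpa using this
end PrincipalPrime

section ResultantDefs
open MvPolynomial

lemma mul_cr {M : Type*} [Mul M] {b c : M} (a : M) (h : b = c) : a * b = a * c := by rw [h]

noncomputable def resRow {k : Type*} [Field k] {n : ℕ} {τ : Type*} [Fintype τ]
    (Φ : Fin (n + 1) → τ → MvPolynomial (Fin n) k) (l : Fin (n + 1)) :
    MvPolynomial (Fin n) (MvPolynomial (Fin (n + 1) × τ) k) :=
  ∑ t, C (X (l, t)) * map C (Φ l t)

noncomputable def resPsi {k : Type*} [Field k] {n : ℕ} {τ : Type*} [Fintype τ]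
    (Φ : Fin (n + 1) → τ → MvPolynomial (Fin n) k) :
    MvPolynomial (Fin (n + 1) × Option τ) k →ₐ[k]
      MvPolynomial (Fin n) (MvPolynomial (Fin (n + 1) × τ) k) :=
  aeval fun v => v.2.elim (-(resRow Φ v.1)) (fun t => C (X (v.1, t)))

lemma eval₂Hom_map_C {k B υ ι : Type*} [Field k] [CommRing B] [Algebra k B]
    (c : υ → B) (x : ι → B) (φ : MvPolynomial ι k) :
    eval₂Hom ((aeval c : MvPolynomial υ k →ₐ[k] B) : MvPolynomial υ k →+* B) x (map C φ)
      = aeval x φ := by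
  rw [coe_eval₂Hom, eval₂_map, aeval_def]
  congr 1
  ext a
  simp

lemma resPsi_vanish {k : Type*} [Field k] {n : ℕ} {τ : Type*} [Fintype τ]
    (Φ : Fin (n + 1) → τ → MvPolynomial (Fin n) k) {B : Type*} [CommRing B] [Algebra k B]
    (c : Fin (n + 1) × Option τ → B) (x : Fin n → B)
    (h : ∀ l, ∑ t, c (l, some t) * aeval x (Φ l t) + c (l, none) = 0)
    (R : MvPolynomial (Fin (n + 1) × Option τ) k) (hR : resPsi Φ R = 0) : aeval c R = 0 := by
  have key : ∀ R, eval₂Hom ((aeval (fun p : Fin (n + 1) × τ => c (p.1, some p.2)) :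
      MvPolynomial (Fin (n + 1) × τ) k →ₐ[k] B) : MvPolynomial _ k →+* B) x (resPsi Φ R)
      = aeval c R := by
    intro R
    induction R using MvPolynomial.induction_on with
    | C a => 
      rw [← algebraMap_eq, AlgHom.commutes, AlgHom.commutes]
      rw [IsScalarTower.algebraMap_apply k (MvPolynomial (Fin (n + 1) × τ) k)]
      simp only [algebraMap_eq, eval₂Hom_C]
      simp
    | add p q hp hq => simp only [map_add, hp, hq]
    | mul_X p v hp =>
      rw [map_mul, map_mul, map_mul, hp]
      refine mul_cr _ ?_
      obtain ⟨l, o⟩ := v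
      cases o with
      | some t => simp [resPsi]
      | none =>
        simp only [resPsi, aeval_X, Option.elim_none, map_neg, resRow, map_sum, map_mul,
          eval₂Hom_map_C]
        have := h l
        simp only [eval₂Hom_C, RingHom.coe_coe, aeval_X]
        linear_combination -this
  rw [← key, hR, map_zero]

section ResIndep
variable {k : Type*} [Field k] {n : ℕ} {τ : Type*} [DecidableEq τ]

noncomputable def riSt (k : Type*) [Field k] {n : ℕ} {τ : Type*} [DecidableEq τ]
    (star : Fin n → τ) (p : Fin (n + 1) × τ) : MvPolynomial (Fin n ⊕ Fin n) k :=
  if h : p.1 ≠ Fin.last n then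
    (if p.2 = star (p.1.castPred h) then X (Sum.inl (p.1.castPred h)) else 0) else 0

noncomputable def riInf (k : Type*) [Field k] {n : ℕ} (l : Fin (n + 1)) :
    MvPolynomial (Fin n ⊕ Fin n) k :=
  if h : l ≠ Fin.last n then X (Sum.inr (l.castPred h)) else 0

noncomputable def riTh (star : Fin n → τ) :
    MvPolynomial {v : Fin (n + 1) × Option τ // v ≠ (Fin.last n, none)} k →ₐ[k]
      MvPolynomial (Fin (n + 1) × τ) (MvPolynomial (Fin n ⊕ Fin n) k) :=
  aeval fun v => v.1.2.elim (C (riInf k v.1.1)) (fun t => X (v.1.1, t) + C (riSt k star (v.1.1, t)))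

open Classical in
noncomputable def riThInv (star : Fin n → τ) :
    MvPolynomial (Fin (n + 1) × τ) (MvPolynomial (Fin n ⊕ Fin n) k) →+*
        MvPolynomial {v : Fin (n + 1) × Option τ // v ≠ (Fin.last n, none)} k :=
  eval₂Hom ((aeval (fun s => Sum.elim
        (fun l : Fin n => (X ⟨(l.castSucc, some (star l)), by simp⟩ :
          MvPolynomial {v : Fin (n + 1) × Option τ // v ≠ (Fin.last n, none)} k))
        (fun l : Fin n => X ⟨(l.castSucc, none), by simp [Fin.castSucc_ne_last]⟩) s) :
        MvPolynomial (Fin n ⊕ Fin n) k →ₐ[k] _) : MvPolynomial (Fin n ⊕ Fin n) k →+* _)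
    (fun p => if riSt k star p = 0 then X ⟨(p.1, some p.2), by simp⟩ else 0)

lemma riTh_inv (star : Fin n → τ)
    (b : MvPolynomial {v : Fin (n + 1) × Option τ // v ≠ (Fin.last n, none)} k) :
    riThInv star (riTh star b) = b := by
  induction b using MvPolynomial.induction_on with
  | C a =>
    rw [← algebraMap_eq, AlgHom.commutes,
      IsScalarTower.algebraMap_apply k (MvPolynomial (Fin n ⊕ Fin n) k)]
    simp only [algebraMap_eq, riThInv, eval₂Hom_C]
    simp
  | add p q hp hq => simp only [map_add, hp, hq]
  | mul_X p v hp =>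
    rw [map_mul, map_mul, hp]
    refine mul_cr _ ?_
    obtain ⟨⟨l, o⟩, hv⟩ := v
    cases o with
    | none =>
      have hl : l ≠ Fin.last n := by rintro rfl; exact hv rfl
      simp [riTh, riThInv, riInf, hl]
    | some t =>
      by_cases hl : l = Fin.last n
      · simp [riTh, riThInv, riSt, hl]
      · by_cases ht : t = star (l.castPred hl)
        · subst ht
          simp [riTh, riThInv, riSt, hl, X_ne_zero]
        · simp [riTh, riThInv, riSt, hl, ht]

variable [Fintype τ] {Ω : Type*} [Field Ω] [Algebra k Ω]

noncomputable def riPsi (Φ : Fin (n + 1) → τ → MvPolynomial (Fin n) k)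
    (ψ : MvPolynomial (Fin n ⊕ Fin n) k →ₐ[k] Ω) (x : Fin n → Ω) :
    MvPolynomial (Fin n ⊕ Fin n) k →ₐ[k] MvPolynomial (Fin (n + 1) × τ) Ω :=
  aeval fun s => Sum.elim (fun l => C (ψ (X (Sum.inl l))))
      (fun l => C (ψ (X (Sum.inr l))) - ∑ t, X (l.castSucc, t) * C (aeval x (Φ l.castSucc t))) s

lemma riPsi_const (Φ : Fin (n + 1) → τ → MvPolynomial (Fin n) k)
    (ψ : MvPolynomial (Fin n ⊕ Fin n) k →ₐ[k] Ω) (x : Fin n → Ω) (q) :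
    constantCoeff (riPsi Φ ψ x q) = ψ q := by
  induction q using MvPolynomial.induction_on with
  | C a =>
    rw [← algebraMap_eq, AlgHom.commutes, AlgHom.commutes, IsScalarTower.algebraMap_apply k Ω,
      algebraMap_eq, constantCoeff_C]
  | add p q hp hq => simp only [map_add, hp, hq]
  | mul_X p v hp =>
    rw [map_mul, map_mul, map_mul, hp]
    refine mul_cr _ ?_
    cases v with
    | inl l => simp [riPsi]
    | inr l => simp [riPsi]

noncomputable def riPt (Φ : Fin (n + 1) → τ → MvPolynomial (Fin n) k)
    (star : Fin n → τ) (ψ : MvPolynomial (Fin n ⊕ Fin n) k →ₐ[k] Ω) (x : Fin n → Ω) :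
    Fin (n + 1) × Option τ → MvPolynomial (Fin (n + 1) × τ) Ω := fun v =>
  v.2.elim (if v.1 = Fin.last n then - ∑ t, X (Fin.last n, t) * C (aeval x (Φ (Fin.last n) t))
      else riPsi Φ ψ x (riInf k v.1)) (fun t => X (v.1, t) + riPsi Φ ψ x (riSt k star (v.1, t)))

lemma riPt_comp (Φ : Fin (n + 1) → τ → MvPolynomial (Fin n) k)
    (star : Fin n → τ) (ψ : MvPolynomial (Fin n ⊕ Fin n) k →ₐ[k] Ω) (x : Fin n → Ω)
    (b : MvPolynomial {v : Fin (n + 1) × Option τ // v ≠ (Fin.last n, none)} k) :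
    eval₂Hom (riPsi Φ ψ x : MvPolynomial (Fin n ⊕ Fin n) k →+* MvPolynomial (Fin (n + 1) × τ) Ω) X
      (riTh star b) = aeval (riPt Φ star ψ x ∘ Subtype.val) b := by
  induction b using MvPolynomial.induction_on with
  | C a =>
    rw [← algebraMap_eq, AlgHom.commutes, AlgHom.commutes,
      IsScalarTower.algebraMap_apply k (MvPolynomial (Fin n ⊕ Fin n) k),
      algebraMap_eq, eval₂Hom_C, RingHom.coe_coe, AlgHom.commutes]
  | add p q hp hq => simp only [map_add, hp, hq]
  | mul_X p v hp =>
    rw [map_mul, map_mul, map_mul, hp]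
    refine mul_cr _ ?_
    obtain ⟨⟨l, o⟩, hv⟩ := v
    cases o with
    | none =>
      have hl : l ≠ Fin.last n := by rintro rfl; exact hv rfl
      simp [riTh, riPt, hl]
    | some t => simp [riTh, riPt]

lemma riPt_row (Φ : Fin (n + 1) → τ → MvPolynomial (Fin n) k) (D : Fin (n + 1) → ℕ)
    (star : Fin n → τ) (hstar : ∀ l : Fin n, Φ l.castSucc (star l) = X l ^ D l.castSucc)
    (ψ : MvPolynomial (Fin n ⊕ Fin n) k →ₐ[k] Ω) (x : Fin n → Ω)
    (hx : ∀ l : Fin n, ψ (X (Sum.inl l)) * x l ^ D l.castSucc + ψ (X (Sum.inr l)) = 0)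
    (l : Fin (n + 1)) :
    ∑ t, riPt Φ star ψ x (l, some t) *
      aeval (fun l => (C (x l) : MvPolynomial (Fin (n + 1) × τ) Ω)) (Φ l t) +
      riPt Φ star ψ x (l, none) = 0 := by
  have hCx : ∀ φ : MvPolynomial (Fin n) k,
      aeval (fun l => (C (x l) : MvPolynomial (Fin (n + 1) × τ) Ω)) φ = C (aeval x φ) := by
    intro φ
    have := (aeval_algebraMap_apply (MvPolynomial (Fin (n + 1) × τ) Ω) x φ)
    simpa [algebraMap_eq, Function.comp_def] using this
  simp only [hCx]
  refine Fin.lastCases ?_ (fun l => ?_) l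
  · simp [riPt, riSt]
  · have hl : l.castSucc ≠ Fin.last n := Fin.castSucc_ne_last l
    simp only [riPt, Option.elim_some, Option.elim_none, if_neg hl, add_mul, Finset.sum_add_distrib]
    rw [Finset.sum_eq_single (f := fun t => riPsi Φ ψ x (riSt k star (l.castSucc, t)) *
      C (aeval x (Φ l.castSucc t))) (star l)]
    · rw [hstar]
      have e1 : riSt k star (l.castSucc, star l) = X (Sum.inl l) := by simp [riSt, hl]
      have e2 : riInf k l.castSucc = X (Sum.inr l) := by simp [riInf, hl]
      rw [e1, e2]
      have h3 := congrArg (C : Ω →+* MvPolynomial (Fin (n + 1) × τ) Ω) (hx l)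
      simp only [map_add, map_mul, map_pow, map_zero] at h3
      simp only [riPsi, aeval_X, Sum.elim_inl, Sum.elim_inr, map_pow]
      linear_combination h3
    · intro t _ ht
      have : riSt k star (l.castSucc, t) = 0 := by simp [riSt, ht]
      simp [this]
    · simp

theorem res_indep_aux (Φ : Fin (n + 1) → τ → MvPolynomial (Fin n) k) (D : Fin (n + 1) → ℕ)
    (hD : ∀ l, 1 ≤ D l) [IsAlgClosed Ω]
    (star : Fin n → τ) (hstar : ∀ l : Fin n, Φ l.castSucc (star l) = X l ^ D l.castSucc)
    (ψ : MvPolynomial (Fin n ⊕ Fin n) k →ₐ[k] Ω) (hψ : Function.Injective ψ)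
    (a : MvPolynomial {v : Fin (n + 1) × Option τ // v ≠ (Fin.last n, none)} k)
    (ha : resPsi Φ (rename Subtype.val a) = 0) : a = 0 := by
  by_contra ha0
  have hx : ∀ l : Fin n, ∃ x : Ω, ψ (X (Sum.inl l)) * x ^ D l.castSucc + ψ (X (Sum.inr l)) = 0 := by
    intro l
    have h1 : ψ (X (Sum.inl l)) ≠ 0 := by
      rw [map_ne_zero_iff _ hψ]; exact X_ne_zero _
    obtain ⟨x, hx⟩ := IsAlgClosed.exists_pow_nat_eq (- ψ (X (Sum.inr l)) / ψ (X (Sum.inl l)))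
      (hD l.castSucc)
    refine ⟨x, ?_⟩
    rw [hx, mul_div_cancel₀ _ h1, neg_add_cancel]
  choose x hx using hx
  have h1 : aeval (riPt Φ star ψ x) (rename Subtype.val a) = 0 :=
    resPsi_vanish Φ _ _ (riPt_row Φ D star hstar ψ x hx) _ ha
  rw [aeval_rename, ← riPt_comp] at h1
  obtain ⟨α, h3, h4⟩ := lowest_order (ψ : MvPolynomial (Fin n ⊕ Fin n) k →+* Ω) _
    (riPsi_const Φ ψ x) (riTh star a)
    (fun h => ha0 (by rw [← riTh_inv star a, h, map_zero])) h1
  exact h3 ((map_eq_zero_iff _ hψ).1 h4)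

end ResIndep

/-- Elements of the kernel not involving the last constant term vanish. -/
theorem res_indep {k : Type*} [Field k] {n : ℕ} {τ : Type*} [Fintype τ] [DecidableEq τ]
    (Φ : Fin (n + 1) → τ → MvPolynomial (Fin n) k) (D : Fin (n + 1) → ℕ) (hD : ∀ l, 1 ≤ D l)
    (star : Fin n → τ) (hstar : ∀ l : Fin n, Φ l.castSucc (star l) = X l ^ D l.castSucc)
    (a : MvPolynomial {v : Fin (n + 1) × Option τ // v ≠ (Fin.last n, none)} k)
    (ha : resPsi Φ (rename Subtype.val a) = 0) : a = 0 := by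
  let Q := MvPolynomial (Fin n ⊕ Fin n) k
  let Ω := AlgebraicClosure (FractionRing Q)
  let ψ : Q →ₐ[k] Ω := IsScalarTower.toAlgHom k Q Ω
  have hψ : Function.Injective ψ := by
    change Function.Injective (algebraMap Q Ω)
    rw [IsScalarTower.algebraMap_eq Q (FractionRing Q) Ω]
    exact (algebraMap (FractionRing Q) Ω).injective.comp (IsFractionRing.injective Q _)
  exact res_indep_aux Φ D hD star hstar ψ hψ a ha

end ResultantDefs

section RowDegree
open MvPolynomial
variable {k : Type*} [Field k] {n : ℕ} {τ : Type*}

noncomputable def rdG0 (j : Fin (n + 1)) (b : τ → k) :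
    MvPolynomial (Fin n) (MvPolynomial (Fin (n + 1) × τ) k) →+*
      MvPolynomial (Fin (n + 1) × Option τ) k :=
  eval₂Hom ((aeval (fun p : Fin (n + 1) × τ => if p.1 = j then
      (X (j, some p.2) - C (b p.2) * X (j, none) : MvPolynomial (Fin (n + 1) × Option τ) k)
      else X (p.1, some p.2)) : MvPolynomial (Fin (n + 1) × τ) k →ₐ[k] _) :
      MvPolynomial (Fin (n + 1) × τ) k →+* _)
    (fun l => X (j.succAbove l, none))

noncomputable def rdG (j : Fin (n + 1)) (b : τ → k) :
    Polynomial (MvPolynomial (Fin n) (MvPolynomial (Fin (n + 1) × τ) k)) →+*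
      MvPolynomial (Fin (n + 1) × Option τ) k :=
  Polynomial.eval₂RingHom (rdG0 j b) (X (j, none))

noncomputable def rdGinv (j : Fin (n + 1)) (b : τ → k) :
    MvPolynomial (Fin (n + 1) × Option τ) k →+*
      Polynomial (MvPolynomial (Fin n) (MvPolynomial (Fin (n + 1) × τ) k)) :=
  eval₂Hom (Polynomial.C.comp (C.comp C)) (fun v => v.2.elim
    (j.insertNth (α := fun _ => Polynomial (MvPolynomial (Fin n) (MvPolynomial (Fin (n + 1) × τ) k)))
      Polynomial.X (fun l => Polynomial.C (X l)) v.1)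
    (fun t => Polynomial.C (C (X (v.1, t))) +
      if v.1 = j then Polynomial.C (C (C (b t))) * Polynomial.X else 0))

lemma rdGinv_rdG (j : Fin (n + 1)) (b : τ → k) (r) : rdGinv j b (rdG j b r) = r := by
  have : (rdGinv j b).comp (rdG j b) = RingHom.id _ := by
    refine Polynomial.ringHom_ext' (MvPolynomial.ringHom_ext' (MvPolynomial.ringHom_ext' ?_ ?_) ?_) ?_
    · ext a
      simp [rdG, rdG0, rdGinv]
    · rintro ⟨l, t⟩
      by_cases hl : l = j
      · subst hl; simp [rdG, rdG0, rdGinv, -coe_eval₂Hom]; ring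
      · simp [rdG, rdG0, rdGinv, hl]
    · intro l
      simp [rdG, rdG0, rdGinv]
    · simp [rdG, rdGinv]
  exact RingHom.congr_fun this r

lemma totalDegree_map_le' {R S σ : Type*} [CommSemiring R] [CommSemiring S] (f : R →+* S)
    (p : MvPolynomial σ R) : (map f p).totalDegree ≤ p.totalDegree :=
  Finset.sup_mono (support_map_subset f p)

variable [Fintype τ]

noncomputable def rdB (Φ : Fin (n + 1) → τ → MvPolynomial (Fin n) k) (j : Fin (n + 1)) (b : τ → k) :
    MvPolynomial (Fin n) (MvPolynomial (Fin (n + 1) × τ) k) →+*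
    MvPolynomial (Fin n) (MvPolynomial (Fin (n + 1) × τ) k) :=
  eval₂Hom ((aeval (fun p : Fin (n + 1) × τ =>
      (C (X p) + if p.1 = j then C (C (b p.2)) * resRow Φ j else 0 :
        MvPolynomial (Fin n) (MvPolynomial (Fin (n + 1) × τ) k))) :
      MvPolynomial (Fin (n + 1) × τ) k →ₐ[k] _) :
      MvPolynomial (Fin (n + 1) × τ) k →+* _) X

lemma rdB_map (Φ : Fin (n + 1) → τ → MvPolynomial (Fin n) k) (j : Fin (n + 1)) (b : τ → k)
    (φ : MvPolynomial (Fin n) k) : rdB Φ j b (map C φ) = map C φ := by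
  rw [rdB, eval₂Hom_map_C]
  have : aeval (R := k) (X : Fin n → MvPolynomial (Fin n) (MvPolynomial (Fin (n + 1) × τ) k)) φ
      = map C φ := by
    induction φ using MvPolynomial.induction_on with
    | C a => rw [aeval_C, map_C]; rfl
    | add p q hp hq => simp only [map_add, hp, hq]
    | mul_X p v hp => rw [map_mul, map_mul, hp, aeval_X, map_X]
  exact this

lemma rdB_CC (Φ : Fin (n + 1) → τ → MvPolynomial (Fin n) k) (j : Fin (n + 1)) (b : τ → k)
    (a : k) : rdB Φ j b (C (C a)) = C (C a) := by
  simp only [rdB, eval₂Hom_C, RingHom.coe_coe]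
  rw [aeval_C]; rfl

lemma rdB_row_ne (Φ : Fin (n + 1) → τ → MvPolynomial (Fin n) k) (j : Fin (n + 1)) (b : τ → k)
    (l : Fin (n + 1)) (hl : l ≠ j) : rdB Φ j b (resRow Φ l) = resRow Φ l := by
  conv_lhs => rw [resRow]
  simp only [map_sum, map_mul, rdB_map]
  rw [resRow]
  refine Finset.sum_congr rfl fun t _ => ?_
  simp [rdB, hl]

lemma rdB_row_self (Φ : Fin (n + 1) → τ → MvPolynomial (Fin n) k) (j : Fin (n + 1)) (b : τ → k) :
    rdB Φ j b (resRow Φ j) = resRow Φ j * (1 + ∑ t, C (C (b t)) * map C (Φ j t)) := by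
  conv_lhs => rw [resRow]
  simp only [map_sum, map_mul, rdB_map]
  rw [mul_add, mul_one]
  conv_rhs => lhs; rw [resRow]
  rw [Finset.mul_sum, ← Finset.sum_add_distrib]
  refine Finset.sum_congr rfl fun t _ => ?_
  simp only [rdB, eval₂Hom_C, RingHom.coe_coe, aeval_X, if_true]
  ring

lemma rdB_aeval (Φ : Fin (n + 1) → τ → MvPolynomial (Fin n) k) (j : Fin (n + 1)) (b : τ → k) (c) :
    rdB Φ j b (aeval (fun l => - resRow Φ (j.succAbove l)) c) = resPsi Φ (rdG0 j b c) := by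
  have : (rdB Φ j b).comp ((aeval (fun l => - resRow Φ (j.succAbove l)) :
      MvPolynomial (Fin n) (MvPolynomial (Fin (n + 1) × τ) k) →ₐ[_] _) : _ →+* _)
      = (resPsi Φ : _ →+* _).comp (rdG0 j b) := by
    refine (MvPolynomial.ringHom_ext' (MvPolynomial.ringHom_ext' ?_ ?_) ?_)
    · ext1 a
      have h := rdB_CC Φ j b a
      have h2 : resPsi Φ (C a) = C (C a) := by
        rw [resPsi, aeval_C]; rfl
      simp only [RingHom.comp_apply, RingHom.coe_coe]
      rw [aeval_C, algebraMap_eq, h]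
      simp only [rdG0, eval₂Hom_C, RingHom.coe_coe, aeval_C, algebraMap_eq, h2]
    · rintro ⟨l, t⟩
      simp only [RingHom.comp_apply, RingHom.coe_coe]
      rw [aeval_C, algebraMap_eq]
      simp only [rdB, rdG0, eval₂Hom_C, RingHom.coe_coe, aeval_X]
      by_cases hl : l = j
      · subst hl
        have h2 : resPsi Φ (C (b t)) = C (C (b t)) := by
          rw [resPsi, aeval_C]; rfl
        simp only [if_true, map_sub, map_mul, h2]
        simp [resPsi]
        ring
      · simp [hl, resPsi]
    · intro l
      simp only [RingHom.comp_apply, RingHom.coe_coe, aeval_X, map_neg]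
      rw [rdB_row_ne _ _ _ _ (Fin.succAbove_ne j l)]
      simp [rdG0, resPsi]
  exact RingHom.congr_fun this c

lemma resRow_totalDegree (Φ : Fin (n + 1) → τ → MvPolynomial (Fin n) k) (D : Fin (n + 1) → ℕ)
    (hΦ : ∀ l t, (Φ l t).totalDegree ≤ D l) (l) : (resRow Φ l).totalDegree ≤ D l := by
  refine totalDegree_finsetSum_le fun t _ => ?_
  refine (totalDegree_mul _ _).trans ?_
  rw [totalDegree_C, zero_add]
  exact (totalDegree_map_le' _ _).trans (hΦ l t)

/-- the relation produced by the counting lemma -/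
theorem rd_relation (Φ : Fin (n + 1) → τ → MvPolynomial (Fin n) k) (D : Fin (n + 1) → ℕ)
    (hD : ∀ l, 1 ≤ D l) (hΦ : ∀ l t, (Φ l t).totalDegree ≤ D l) (j : Fin (n + 1)) (b : τ → k)
    (hb : 1 + ∑ t, b t * constantCoeff (Φ j t) ≠ 0) :
    ∃ r : Polynomial (MvPolynomial (Fin n) (MvPolynomial (Fin (n + 1) × τ) k)), r ≠ 0 ∧
      r.natDegree ≤ ∏ l, D (j.succAbove l) ∧ resPsi Φ (rdG j b r) = 0 := by
  set δ := ∏ l, D (j.succAbove l) with hδ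
  set v : MvPolynomial (Fin n) (MvPolynomial (Fin (n + 1) × τ) k) :=
    1 + ∑ t, C (C (b t)) * map C (Φ j t) with hv
  have hv0 : v ≠ 0 := by
    intro h0
    apply hb
    have := congrArg (fun z => constantCoeff (constantCoeff z)) h0
    simpa [hv, constantCoeff_map] using this
  have hvd : v.totalDegree ≤ D j := by
    refine (totalDegree_add _ _).trans (max_le (by simp) ?_)
    refine totalDegree_finsetSum_le fun t _ => ?_
    refine (totalDegree_mul _ _).trans ?_
    rw [totalDegree_C, zero_add]
    exact (totalDegree_map_le' _ _).trans (hΦ j t)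
  obtain ⟨r, hr0, hrd, hr⟩ := counting n (fun l => D (j.succAbove l)) (fun l => hD _)
    (fun l => - resRow Φ (j.succAbove l)) (fun l => by
      rw [totalDegree_neg]; exact resRow_totalDegree Φ D hΦ _) (D j) (- resRow Φ j) v
    (by rw [totalDegree_neg]; exact resRow_totalDegree Φ D hΦ _) hvd
  refine ⟨r, hr0, hrd, ?_⟩
  have h1 := congrArg (rdB Φ j b) hr
  rw [map_zero, map_sum] at h1
  have hvB : rdB Φ j b v = v := by
    simp only [hv, map_add, map_one, map_sum, map_mul, rdB_map]
    simp only [rdB_CC]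
  have h2 : ∀ κ ∈ Finset.range (δ + 1), rdB Φ j b
      (aeval (fun l => - resRow Φ (j.succAbove l)) (r.coeff κ) * (- resRow Φ j) ^ κ * v ^ (δ - κ))
      = v ^ δ * (resPsi Φ (rdG0 j b (r.coeff κ)) * (- resRow Φ j) ^ κ) := by
    intro κ hκ
    have hneg : -(resRow Φ j * v) = (-resRow Φ j) * v := by ring
    rw [map_mul, map_mul, map_pow, map_pow, rdB_aeval, hvB, map_neg, rdB_row_self, ← hv,
      hneg, mul_pow]
    have : v ^ δ = v ^ κ * v ^ (δ - κ) := by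
      rw [← pow_add, Nat.add_sub_cancel' (Nat.lt_succ_iff.1 (Finset.mem_range.1 hκ))]
    rw [this]; ring
  rw [Finset.sum_congr rfl h2, ← Finset.mul_sum, mul_eq_zero] at h1
  have h3 := h1.resolve_left (pow_ne_zero _ hv0)
  rw [rdG, Polynomial.coe_eval₂RingHom,
    Polynomial.eval₂_eq_sum_range' _ (Nat.lt_succ_of_le hrd), map_sum, ← h3]
  refine Finset.sum_congr rfl fun κ _ => ?_
  rw [map_mul, map_pow]
  congr 2
  simp [resPsi]

end RowDegree

section RowDegree2
open MvPolynomial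
variable {k : Type*} [Field k] {n : ℕ} {τ : Type*}

noncomputable def rdH (j : Fin (n + 1)) (a : Option τ → k) :
    MvPolynomial (Fin (n + 1) × Option τ) k →+*
      Polynomial (MvPolynomial (Fin (n + 1) × Option τ) k) :=
  eval₂Hom (Polynomial.C.comp C) (fun v => Polynomial.C (X v) +
    if v.1 = j then Polynomial.C (C (a v.2)) * Polynomial.X else 0)

lemma rdH_inj (j : Fin (n + 1)) (a : Option τ → k) : Function.Injective (rdH j a) := by
  have : (Polynomial.evalRingHom 0).comp (rdH j a) = RingHom.id _ := by
    refine MvPolynomial.ringHom_ext' ?_ ?_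
    · ext1 c; simp [rdH]
    · rintro ⟨l, o⟩
      by_cases hl : l = j
      · simp [rdH, hl]
      · simp [rdH, hl]
  exact Function.LeftInverse.injective (g := Polynomial.evalRingHom 0)
    (fun x => RingHom.congr_fun this x)

lemma rdH_rdG0 (j : Fin (n + 1)) (a : Option τ → k) (b : τ → k)
    (hb : ∀ t, b t * a none = a (some t)) (c) :
    rdH j a (rdG0 j b c) = Polynomial.C (rdG0 j b c) := by
  have : (rdH j a).comp (rdG0 j b) = (Polynomial.C).comp (rdG0 j b) := by
    refine (MvPolynomial.ringHom_ext' (MvPolynomial.ringHom_ext' ?_ ?_) ?_)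
    · ext1 c; simp [rdH, rdG0]
    · rintro ⟨l, t⟩
      by_cases hl : l = j
      · subst hl
        have := hb t
        simp [rdH, rdG0, -coe_eval₂Hom, ← this]
        ring
      · simp [rdH, rdG0, hl]
    · intro l
      simp [rdH, rdG0]
  exact RingHom.congr_fun this c

lemma rdH_upper (j : Fin (n + 1)) (a : Option τ → k) (b : τ → k)
    (hb : ∀ t, b t * a none = a (some t)) (r) (δ : ℕ) (hr : r.natDegree ≤ δ) :
    (rdH j a (rdG j b r)).natDegree ≤ δ := by
  rw [rdG, Polynomial.coe_eval₂RingHom,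
    Polynomial.eval₂_eq_sum_range' _ (Nat.lt_succ_of_le hr), map_sum]
  refine Polynomial.natDegree_sum_le_of_forall_le _ _ fun κ hκ => ?_
  rw [map_mul, map_pow, rdH_rdG0 j a b hb]
  refine (Polynomial.natDegree_C_mul_le _ _).trans ?_
  refine Polynomial.natDegree_pow_le.trans ?_
  have : (rdH j a (X (j, none))).natDegree ≤ 1 := by
    simp only [rdH, eval₂Hom_X', if_true]
    refine (Polynomial.natDegree_add_le _ _).trans (max_le (by simp) ?_)
    exact (Polynomial.natDegree_C_mul_le _ _).trans Polynomial.natDegree_X_le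
  have hκ' := Nat.lt_succ_iff.1 (Finset.mem_range.1 hκ)
  exact (Nat.mul_le_mul_left κ this).trans (by omega)

variable [Fintype τ]

def rowDeg (j : Fin (n + 1)) (m : Fin (n + 1) × Option τ →₀ ℕ) : ℕ := ∑ o, m (j, o)

lemma rdH_lower_monomial (j : Fin (n + 1)) (z : Fin (n + 1) × Option τ → k)
    (m : Fin (n + 1) × Option τ →₀ ℕ) (c : k) :
    Polynomial.mapRingHom (eval (fun v => if v.1 = j then 0 else z v))
      (rdH j (fun o => z (j, o)) (monomial m c))
    = Polynomial.monomial (rowDeg j m) (eval z (monomial m c)) := by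
  rw [rdH, coe_eval₂Hom, eval₂_monomial, map_mul, Finsupp.prod_fintype _ _ (by simp), map_prod]
  have h1 : ∀ v : Fin (n + 1) × Option τ,
      Polynomial.mapRingHom (eval (fun v => if v.1 = j then 0 else z v))
      ((Polynomial.C (X v) +
        if v.1 = j then Polynomial.C (C (z (j, v.2))) * Polynomial.X else 0) ^ m v)
      = Polynomial.C (z v ^ m v) * Polynomial.X ^ (if v.1 = j then m v else 0) := by
    rintro ⟨l, o⟩
    by_cases hl : l = j
    · subst hl
      simp [mul_pow]
    · simp [hl]
  rw [Finset.prod_congr rfl (fun v _ => h1 v), Finset.prod_mul_distrib, Finset.prod_pow_eq_pow_sum,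
    ← map_prod]
  have h2 : ∑ v : Fin (n + 1) × Option τ, (if v.1 = j then m v else 0) = rowDeg j m := by
    rw [Fintype.sum_prod_type, Finset.sum_eq_single j]
    · simp [rowDeg]
    · intro l _ hl; simp [hl]
    · simp
  rw [h2, eval_monomial, Finsupp.prod_fintype _ _ (by simp), ← mul_assoc]
  simp only [RingHom.comp_apply, Polynomial.coe_mapRingHom, Polynomial.map_C, eval_C]
  rw [← Polynomial.C_mul, Polynomial.C_mul_X_pow_eq_monomial]

lemma rdH_lower (j : Fin (n + 1)) (z : Fin (n + 1) × Option τ → k)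
    (q : MvPolynomial (Fin (n + 1) × Option τ) k) (W : ℕ)
    (hz : eval z (∑ m ∈ q.support.filter (fun m => rowDeg j m = W), monomial m (coeff m q)) ≠ 0) :
    W ≤ (rdH j (fun o => z (j, o)) q).natDegree := by
  apply Polynomial.le_natDegree_of_ne_zero
  intro h0
  apply hz
  have h1 : (Polynomial.mapRingHom (eval (fun v => if v.1 = j then 0 else z v))
      (rdH j (fun o => z (j, o)) q)).coeff W = 0 := by
    rw [Polynomial.coe_mapRingHom, Polynomial.coeff_map, h0, map_zero]
  rw [← h1]
  conv_rhs => rw [q.as_sum]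
  simp only [map_sum, Polynomial.finsetSum_coeff, rdH_lower_monomial, Polynomial.coeff_monomial]
  rw [Finset.sum_filter]

theorem exists_resultant [Infinite k] [DecidableEq τ]
    (Φ : Fin (n + 1) → τ → MvPolynomial (Fin n) k) (D : Fin (n + 1) → ℕ)
    (hD : ∀ l, 1 ≤ D l) (hΦ : ∀ l t, (Φ l t).totalDegree ≤ D l)
    (star : Fin n → τ) (hstar : ∀ l : Fin n, Φ l.castSucc (star l) = X l ^ D l.castSucc) :
    ∃ q : MvPolynomial (Fin (n + 1) × Option τ) k, q ≠ 0 ∧ resPsi Φ q = 0 ∧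
      ∀ j, ∀ m ∈ q.support, rowDeg j m ≤ ∏ l, D (j.succAbove l) := by
  classical
  have hne : RingHom.ker (resPsi Φ) ≠ ⊥ := by
    obtain ⟨r, hr0, -, hr⟩ := rd_relation Φ D hD hΦ 0 (fun _ => 0) (by simp)
    intro h
    apply hr0
    have : rdG 0 (fun _ => 0) r ∈ RingHom.ker (resPsi Φ) := hr
    rw [h, Ideal.mem_bot] at this
    rw [← rdGinv_rdG 0 (fun _ => 0) r, this, map_zero]
  obtain ⟨q, hq, hq0, hqd⟩ := principal_mv (Fin.last n, (none : Option τ))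
    (RingHom.ker (resPsi Φ)) (RingHom.ker_isPrime _) hne
    (fun a ha => res_indep Φ D hD star hstar a ha)
  refine ⟨q, hq0, hq, fun j m hm => ?_⟩
  set W := rowDeg j m with hW
  set comp := ∑ m ∈ q.support.filter (fun m => rowDeg j m = W), monomial m (coeff m q) with hcomp
  have hc0 : comp ≠ 0 := by
    intro h0
    have := congrArg (coeff m) h0
    rw [hcomp, coeff_sum, Finset.sum_eq_single m] at this
    · rw [coeff_monomial, if_pos rfl, coeff_zero] at this
      exact mem_support_iff.1 hm this
    · intro m' _ hm'
      rw [coeff_monomial, if_neg hm']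
    · intro h
      exact (h (Finset.mem_filter.2 ⟨hm, hW.symm⟩)).elim
  let lin : MvPolynomial (Fin (n + 1) × Option τ) k :=
    X (j, none) + ∑ t, C (constantCoeff (Φ j t)) * X (j, some t)
  have hlin : lin ≠ 0 := by
    intro h0
    have := congrArg (eval (fun v : Fin (n + 1) × Option τ => v.2.elim 1 (fun _ => (0 : k)))) h0
    simp [lin] at this
  have hprod : comp * X (j, none) * lin ≠ 0 :=
    mul_ne_zero (mul_ne_zero hc0 (X_ne_zero _)) hlin
  obtain ⟨z, hz⟩ : ∃ z, eval z (comp * X (j, none) * lin) ≠ 0 := by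
    by_contra! hcon
    exact hprod (MvPolynomial.funext (fun x => by rw [hcon x, map_zero]))
  rw [map_mul, map_mul, eval_X] at hz
  have hz1 : eval z comp ≠ 0 := left_ne_zero_of_mul (left_ne_zero_of_mul hz)
  have hz2 : z (j, none) ≠ 0 := right_ne_zero_of_mul (left_ne_zero_of_mul hz)
  have hz3 : eval z lin ≠ 0 := right_ne_zero_of_mul hz
  obtain ⟨r, hr0, hrd, hr⟩ := rd_relation Φ D hD hΦ j (fun t => z (j, some t) / z (j, none)) (by
    intro h0
    apply hz3
    simp only [lin, map_add, eval_X, map_sum, map_mul, eval_C]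
    have : z (j, none) * (1 + ∑ t, z (j, some t) / z (j, none) * constantCoeff (Φ j t)) = 0 := by
      rw [h0, mul_zero]
    rw [mul_add, mul_one, Finset.mul_sum] at this
    rw [← this]
    congr 1
    refine Finset.sum_congr rfl fun t _ => ?_
    field_simp)
  have hG0 : rdG j (fun t => z (j, some t) / z (j, none)) r ≠ 0 := by
    intro h
    apply hr0
    rw [← rdGinv_rdG j (fun t => z (j, some t) / z (j, none)) r, h, map_zero]
  have hdvd := map_dvd (rdH j (fun o => z (j, o))) (hqd _ hr)
  refine (rdH_lower j z q W hz1).trans ((Polynomial.natDegree_le_of_dvd hdvd ?_).trans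
    (rdH_upper j _ _ (fun t => ?_) r _ hrd))
  · rw [map_ne_zero_iff _ (rdH_inj _ _)]; exact hG0
  · exact div_mul_cancel₀ _ hz2

end RowDegree2

section Filtration
open MvPolynomial

/-- An increasing multiplicative filtration. -/
structure Filt (Q : Type*) [CommRing Q] where
  F : ℕ → AddSubgroup Q
  mono : ∀ {a b : ℕ}, a ≤ b → F a ≤ F b
  one_mem : (1 : Q) ∈ F 0
  mul_mem : ∀ {a b : ℕ} {x y : Q}, x ∈ F a → y ∈ F b → x * y ∈ F (a + b)

namespace Filt
variable {Q : Type*} [CommRing Q]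

lemma pow_mem (f : Filt Q) {a : ℕ} {x : Q} (hx : x ∈ f.F a) (m : ℕ) : x ^ m ∈ f.F (m * a) := by
  induction m with
  | zero => simpa using f.one_mem
  | succ m ih => rw [pow_succ, Nat.succ_mul]; exact f.mul_mem ih hx

lemma prod_mem (f : Filt Q) {ι : Type*} (s : Finset ι) (g : ι → Q) (w : ι → ℕ)
    (h : ∀ i ∈ s, g i ∈ f.F (w i)) : ∏ i ∈ s, g i ∈ f.F (∑ i ∈ s, w i) := by
  classical
  induction s using Finset.induction_on with
  | empty => simpa using f.one_mem
  | insert a s ha ih =>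
    rw [Finset.prod_insert ha, Finset.sum_insert ha]
    exact f.mul_mem (h a (Finset.mem_insert_self _ _))
      (ih fun i hi => h i (Finset.mem_insert_of_mem hi))

def mv (f : Filt Q) (σ : Type*) : Filt (MvPolynomial σ Q) where
  F N :=
    { carrier := {p | ∀ α, coeff α p ∈ f.F N}
      zero_mem' := fun α => by rw [coeff_zero]; exact zero_mem _
      add_mem' := fun ha hb α => by rw [coeff_add]; exact add_mem (ha α) (hb α)
      neg_mem' := fun ha α => by rw [coeff_neg]; exact neg_mem (ha α) }
  mono := fun h _ hx α => f.mono h (hx α)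
  one_mem := fun α => by
    classical
    rw [coeff_one]
    split_ifs
    · exact f.one_mem
    · exact zero_mem _
  mul_mem := fun hx hy α => by
    classical
    rw [coeff_mul]
    exact sum_mem fun p _ => f.mul_mem (hx p.1) (hy p.2)

lemma mem_mv {f : Filt Q} {σ : Type*} {N : ℕ} {p : MvPolynomial σ Q} :
    p ∈ (f.mv σ).F N ↔ ∀ α, coeff α p ∈ f.F N := Iff.rfl

lemma translate {k σ : Type*} [Field k] [Algebra k Q] [Fintype σ] (f : Filt Q)
    (hk : ∀ c : k, algebraMap k Q c ∈ f.F 0) (a : σ → Q) (w : σ → ℕ) (ha : ∀ v, a v ∈ f.F (w v))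
    (R : MvPolynomial σ k) (N : ℕ) (hN : ∀ m ∈ R.support, ∑ v, m v * w v ≤ N) (α) :
    coeff α (aeval (fun v => (X v + C (a v) : MvPolynomial σ Q)) R) ∈ f.F N := by
  classical
  have h1 : ∀ v, (X v + C (a v) : MvPolynomial σ Q) ∈ (f.mv σ).F (w v) := by
    intro v
    refine add_mem (fun α => ?_) (fun α => ?_)
    · rw [coeff_X]
      split_ifs
      · exact f.mono (Nat.zero_le _) f.one_mem
      · exact zero_mem _
    · rw [coeff_C]
      split_ifs
      · exact ha v
      · exact zero_mem _
  have h2 : aeval (fun v => (X v + C (a v) : MvPolynomial σ Q)) R ∈ (f.mv σ).F N := by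
    rw [aeval_def, eval₂_eq']
    refine sum_mem fun m hm => ?_
    have h3 : algebraMap k (MvPolynomial σ Q) (coeff m R) ∈ (f.mv σ).F 0 := by
      rw [IsScalarTower.algebraMap_apply k Q, algebraMap_eq]
      intro β
      rw [coeff_C]
      split_ifs
      · exact hk _
      · exact zero_mem _
    have h4 := (f.mv σ).mul_mem h3 ((f.mv σ).prod_mem Finset.univ _ _
      (fun v _ => (f.mv σ).pow_mem (h1 v) (m v)))
    rw [zero_add] at h4
    exact (f.mv σ).mono (hN m hm) h4
  exact h2 α

/-- filtration by degree in the main variable -/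
def polyT (A : Type*) [CommRing A] : Filt (Polynomial A) where
  F N :=
    { carrier := {p | p.natDegree ≤ N}
      zero_mem' := by simp
      add_mem' := fun ha hb => (Polynomial.natDegree_add_le _ _).trans (max_le ha hb)
      neg_mem' := fun ha => by simpa using ha }
  mono := fun h _ hx => le_trans hx h
  one_mem := by simp
  mul_mem := fun hx hy => Polynomial.natDegree_mul_le.trans (add_le_add hx hy)

def td (V k : Type*) [Field k] : Filt (MvPolynomial V k) where
  F N :=
    { carrier := {p | p.totalDegree ≤ N}
      zero_mem' := by simp
      add_mem' := fun ha hb => (totalDegree_add _ _).trans (max_le ha hb)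
      neg_mem' := fun ha => by simpa using ha }
  mono := fun h _ hx => le_trans hx h
  one_mem := by simp
  mul_mem := fun hx hy => (totalDegree_mul _ _).trans (add_le_add hx hy)

/-- filtration by degree of the coefficients -/
def polyC (f : Filt Q) : Filt (Polynomial Q) where
  F N :=
    { carrier := {p | ∀ κ, p.coeff κ ∈ f.F N}
      zero_mem' := fun α => by rw [Polynomial.coeff_zero]; exact zero_mem _
      add_mem' := fun ha hb α => by rw [Polynomial.coeff_add]; exact add_mem (ha α) (hb α)
      neg_mem' := fun ha α => by rw [Polynomial.coeff_neg]; exact neg_mem (ha α) }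
  mono := fun h _ hx α => f.mono h (hx α)
  one_mem := fun α => by
    rw [Polynomial.coeff_one]
    split_ifs
    · exact f.one_mem
    · exact zero_mem _
  mul_mem := fun hx hy α => by
    rw [Polynomial.coeff_mul]
    exact sum_mem fun p _ => f.mul_mem (hx p.1) (hy p.2)

lemma mem_polyT {A : Type*} [CommRing A] {N : ℕ} {p : Polynomial A} :
    p ∈ (polyT A).F N ↔ p.natDegree ≤ N := Iff.rfl

lemma mem_td {V k : Type*} [Field k] {N : ℕ} {p : MvPolynomial V k} :
    p ∈ (td V k).F N ↔ p.totalDegree ≤ N := Iff.rfl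

lemma mem_polyC {f : Filt Q} {N : ℕ} {p : Polynomial Q} :
    p ∈ (f.polyC).F N ↔ ∀ κ, p.coeff κ ∈ f.F N := Iff.rfl

lemma polyC_C (f : Filt Q) {N : ℕ} {q : Q} (hq : q ∈ f.F N) : Polynomial.C q ∈ (f.polyC).F N := by
  intro κ
  rw [Polynomial.coeff_C]
  split_ifs
  · exact hq
  · exact zero_mem _

end Filt

lemma translate_ne_zero {k Q σ : Type*} [Field k] [CommRing Q] [Nontrivial Q] [Algebra k Q]
    (a : σ → Q) (R : MvPolynomial σ k) (hR : R ≠ 0) :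
    aeval (fun v => (X v + C (a v) : MvPolynomial σ Q)) R ≠ 0 := by
  have h1 : ∀ R, aeval (fun v => (X v - C (a v) : MvPolynomial σ Q))
      (aeval (fun v => (X v + C (a v) : MvPolynomial σ Q)) R) = map (algebraMap k Q) R := by
    intro R
    induction R using MvPolynomial.induction_on with
    | C c =>
      rw [aeval_C, map_C, IsScalarTower.algebraMap_apply k Q, algebraMap_eq, aeval_C, algebraMap_eq]
    | add p q hp hq => simp only [map_add, hp, hq]
    | mul_X p v hp =>
      simp only [map_mul, hp, aeval_X, map_add, aeval_C, map_X, algebraMap_eq, sub_add_cancel]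
  intro h0
  apply hR
  have h2 := h1 R
  rw [h0, map_zero] at h2
  exact map_injective _ (algebraMap k Q).injective (by rw [← h2, map_zero])
end Filtration

section SysDefs
open MvPolynomial

/-- A sparse polynomial system with generic coefficients: equation `j` is
`∑_{v : ρ v = j} p_v Φ_v = 0`. -/
structure Sys (k : Type*) [Field k] (n : ℕ) (V : Type*) where
  ρ : V → Fin n
  Φ : V → MvPolynomial (Fin n) k
  D : Fin n → ℕ
  hD : ∀ j, 1 ≤ D j
  hΦ : ∀ v, (Φ v).totalDegree ≤ D (ρ v)
  b : Fin n → V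
  hb : ∀ j, ρ (b j) = j
  h : MvPolynomial (Fin n) k
  h0 : h ≠ 0
  hdvd : ∀ j, Φ (b j) ∣ h

namespace Sys
variable {k : Type*} [Field k] {n : ℕ} {V : Type*} (s : Sys k n V)

/-- Row `j` evaluated at parameters `p`, point `x`. -/
noncomputable def row [Fintype V] {B : Type*} [CommRing B] [Algebra k B] (p : V → B) (x : Fin n → B) (j : Fin n) : B :=
  ∑ v, if s.ρ v = j then p v * aeval x (s.Φ v) else 0

def IsSol [Fintype V] {B : Type*} [CommRing B] [Algebra k B] (p : V → B) (x : Fin n → B) : Prop :=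
  ∀ j, s.row p x j = 0

def Δ : ℕ := ∏ j, s.D j

section RA
variable {S : Type*} (φ : S → MvPolynomial (Fin n) k) (e : ℕ)

noncomputable def raΦ (l : Fin (n + 1)) (t : V ⊕ Fin n ⊕ S) : MvPolynomial (Fin n) k :=
  Fin.lastCases (motive := fun _ => MvPolynomial (Fin n) k)
    (Sum.elim (fun _ => 0) (Sum.elim (fun _ => 0) φ) t)
    (fun j => Sum.elim (fun v => if s.ρ v = j then s.Φ v else 0)
      (Sum.elim (fun l => if l = j then X l ^ s.D l else 0) (fun _ => 0)) t) l

def raD (l : Fin (n + 1)) : ℕ := Fin.lastCases (motive := fun _ => ℕ) e s.D l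

noncomputable def raA (a : S → MvPolynomial V k) (w : Fin (n + 1) × Option (V ⊕ Fin n ⊕ S)) :
    Polynomial (MvPolynomial V k) :=
  Fin.lastCases (motive := fun _ => Polynomial (MvPolynomial V k))
    (w.2.elim Polynomial.X (Sum.elim (fun _ => 0) (Sum.elim (fun _ => 0)
      (fun q => - Polynomial.C (a q)))))
    (fun j => w.2.elim 0 (Sum.elim (fun v => if s.ρ v = j then Polynomial.C (X v) else 0)
      (fun _ => 0))) w.1

lemma raD_pos (he : 1 ≤ e) (l) : 1 ≤ s.raD e l := by
  refine Fin.lastCases ?_ (fun j => ?_) l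
  · simpa [raD] using he
  · simpa [raD] using s.hD j

lemma raΦ_deg (hφ : ∀ q, (φ q).totalDegree ≤ e) (l t) :
    (s.raΦ φ l t).totalDegree ≤ s.raD e l := by
  refine Fin.lastCases ?_ (fun j => ?_) l
  · rcases t with v | l | q
    · simp [raΦ]
    · simp [raΦ]
    · simpa [raΦ, raD] using hφ q
  · rcases t with v | l | q
    · simp only [raΦ, raD, Fin.lastCases_castSucc, Sum.elim_inl]
      split_ifs with h
      · rw [← h]; exact s.hΦ v
      · simp
    · simp only [raΦ, raD, Fin.lastCases_castSucc, Sum.elim_inl, Sum.elim_inr]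
      split_ifs with h
      · rw [h]; simp [totalDegree_X_pow]
      · simp
    · simp [raΦ]

lemma raΦ_star (l : Fin n) : s.raΦ φ l.castSucc (Sum.inr (Sum.inl l)) = X l ^ s.raD e l.castSucc := by
  simp [raΦ, raD]

lemma raD_prod_last : ∏ l, s.raD e ((Fin.last n).succAbove l) = s.Δ := by
  simp [raD, Δ]

lemma raD_prod_cast (he : 1 ≤ e) (j : Fin n) :
    ∏ l, s.raD e (j.castSucc.succAbove l) ≤ s.Δ * e := by
  have h1 := Fin.prod_univ_succAbove (s.raD e) j.castSucc
  rw [Fin.prod_univ_castSucc] at h1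
  have h2 : ∏ i : Fin n, s.raD e i.castSucc = s.Δ := by simp [raD, Δ]
  have h3 : s.raD e (Fin.last n) = e := by simp [raD]
  rw [h2, h3] at h1
  rw [h1]
  exact Nat.le_mul_of_pos_left _ (s.raD_pos e he _)

end RA
end Sys
end SysDefs

section SysRA
open MvPolynomial
namespace Sys
variable {k : Type*} [Field k] {n : ℕ} {V : Type*} (s : Sys k n V)
variable {S : Type*} (φ : S → MvPolynomial (Fin n) k) (a : S → MvPolynomial V k)
variable [Fintype V] [Fintype S] {E : Type*} [CommRing E] [Algebra k E]
variable (p0 : V → E) (x0 : Fin n → E) (u : V → E)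

noncomputable def pert (l : Fin (n + 1)) :
    MvPolynomial (Fin (n + 1) × Option (V ⊕ Fin n ⊕ S)) E :=
  ∑ t, X (l, some t) * C (aeval x0 (s.raΦ φ l t)) + X (l, none)

open Classical in
noncomputable def raPsiA :
    MvPolynomial V k →ₐ[k] MvPolynomial (Fin (n + 1) × Option (V ⊕ Fin n ⊕ S)) E :=
  aeval fun v => C (p0 v) - if s.b (s.ρ v) = v then s.pert φ x0 (s.ρ v).castSucc * C (u v) else 0

noncomputable def raPsiT : Polynomial (MvPolynomial V k) →+*
    MvPolynomial (Fin (n + 1) × Option (V ⊕ Fin n ⊕ S)) E :=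
  Polynomial.eval₂RingHom (s.raPsiA φ p0 x0 u : MvPolynomial V k →+* _)
    (∑ q, s.raPsiA φ p0 x0 u (a q) * C (aeval x0 (φ q)) - s.pert φ x0 (Fin.last n))

lemma pert_const (l) : constantCoeff (s.pert φ x0 l) = 0 := by
  simp [pert]

lemma raPsiA_const (q) : constantCoeff (s.raPsiA φ p0 x0 u q) = aeval p0 q := by
  induction q using MvPolynomial.induction_on with
  | C a =>
    rw [← algebraMap_eq, AlgHom.commutes, AlgHom.commutes, IsScalarTower.algebraMap_apply k E,
      algebraMap_eq, constantCoeff_C]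
  | add p q hp hq => simp only [map_add, hp, hq]
  | mul_X p v hp =>
    rw [map_mul, map_mul, map_mul, hp]
    refine mul_cr _ ?_
    simp only [raPsiA, aeval_X, map_sub, constantCoeff_C]
    split_ifs
    · rw [map_mul, pert_const]; simp
    · simp

lemma raPsiT_const (q) : constantCoeff (s.raPsiT φ a p0 x0 u q) =
    Polynomial.eval₂RingHom ((aeval p0 : MvPolynomial V k →ₐ[k] E) : MvPolynomial V k →+* E)
      (∑ q, aeval p0 (a q) * aeval x0 (φ q)) q := by
  rw [← RingHom.comp_apply]
  congr 1
  refine Polynomial.ringHom_ext' ?_ ?_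
  · refine RingHom.ext fun q => ?_
    simp [raPsiT, raPsiA_const]
  · simp only [raPsiT, RingHom.comp_apply, Polynomial.coe_eval₂RingHom, Polynomial.eval₂_X, map_sub,
      pert_const, map_sum, map_mul, raPsiA_const, constantCoeff_C, sub_zero]

lemma raPsiT_comp (R : MvPolynomial (Fin (n + 1) × Option (V ⊕ Fin n ⊕ S)) k) :
    eval₂Hom (s.raPsiT φ a p0 x0 u) X
      (aeval (fun v => (X v + C (s.raA a v) : MvPolynomial _ (Polynomial (MvPolynomial V k)))) R)
      = aeval (fun v => X v + s.raPsiT φ a p0 x0 u (s.raA a v)) R := by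
  induction R using MvPolynomial.induction_on with
  | C c =>
    rw [aeval_C, aeval_C, IsScalarTower.algebraMap_apply k (Polynomial (MvPolynomial V k)),
      algebraMap_eq, eval₂Hom_C, IsScalarTower.algebraMap_apply k (MvPolynomial V k),
      Polynomial.algebraMap_eq, raPsiT, Polynomial.coe_eval₂RingHom, Polynomial.eval₂_C,
      RingHom.coe_coe, AlgHom.commutes]
  | add p q hp hq => simp only [map_add, hp, hq]
  | mul_X p v hp =>
    rw [map_mul, map_mul, map_mul, hp]
    refine mul_cr _ ?_
    rw [aeval_X, aeval_X, map_add, eval₂Hom_C, eval₂Hom_X']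

lemma raRow (hu : ∀ j, u (s.b j) * aeval x0 (s.Φ (s.b j)) = 1) (hsol : s.IsSol p0 x0) (l) :
    ∑ t, (X (l, some t) + s.raPsiT φ a p0 x0 u (s.raA a (l, some t))) *
      aeval (fun l => (C (x0 l) : MvPolynomial (Fin (n + 1) × Option (V ⊕ Fin n ⊕ S)) E))
        (s.raΦ φ l t) +
      (X (l, none) + s.raPsiT φ a p0 x0 u (s.raA a (l, none))) = 0 := by
  classical
  have hCx : ∀ φ : MvPolynomial (Fin n) k,
      aeval (fun l => (C (x0 l) : MvPolynomial (Fin (n + 1) × Option (V ⊕ Fin n ⊕ S)) E)) φ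
        = C (aeval x0 φ) := by
    intro φ
    have := (aeval_algebraMap_apply (MvPolynomial (Fin (n + 1) × Option (V ⊕ Fin n ⊕ S)) E) x0 φ)
    simpa [algebraMap_eq, Function.comp_def] using this
  simp only [hCx, add_mul, Finset.sum_add_distrib]
  suffices h : s.pert φ x0 l + (∑ t, s.raPsiT φ a p0 x0 u (s.raA a (l, some t)) *
      C (aeval x0 (s.raΦ φ l t)) + s.raPsiT φ a p0 x0 u (s.raA a (l, none))) = 0 by
    rw [← h, pert]; ring
  refine Fin.lastCases ?_ (fun j => ?_) l
  · simp only [Fintype.sum_sum_type, raA, raΦ, Fin.lastCases_last, Option.elim_some, Sum.elim_inl,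
      Sum.elim_inr, map_zero, zero_mul, Finset.sum_const_zero, zero_add, Option.elim_none]
    simp only [raPsiT, Polynomial.coe_eval₂RingHom, Polynomial.eval₂_neg, Polynomial.eval₂_C,
      Polynomial.eval₂_X, RingHom.coe_coe, neg_mul, Finset.sum_neg_distrib]
    ring
  · simp only [Fintype.sum_sum_type, raA, raΦ, Fin.lastCases_castSucc, Option.elim_some,
      Sum.elim_inl, Sum.elim_inr, map_zero, zero_mul, Finset.sum_const_zero, add_zero,
      Option.elim_none]
    have h1 : ∀ v, s.raPsiT φ a p0 x0 u (if s.ρ v = j then Polynomial.C (X v) else 0) *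
        C (aeval x0 (if s.ρ v = j then s.Φ v else 0)) =
        C (if s.ρ v = j then p0 v * aeval x0 (s.Φ v) else 0) -
          (if v = s.b j then s.pert φ x0 j.castSucc else 0) := by
      intro v
      by_cases h2 : s.ρ v = j
      · simp only [h2, if_true, raPsiT, Polynomial.coe_eval₂RingHom, Polynomial.eval₂_C,
          RingHom.coe_coe, raPsiA, aeval_X]
        by_cases h3 : v = s.b j
        · have h4 := congrArg (C : E →+* MvPolynomial (Fin (n + 1) × Option (V ⊕ Fin n ⊕ S)) E)
            (hu j)
          simp only [map_mul, map_one] at h4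
          subst h3
          rw [if_pos rfl, if_pos rfl, map_mul]
          linear_combination - s.pert φ x0 j.castSucc * h4
        · rw [if_neg (fun h => h3 h.symm), if_neg h3]
          simp
      · have h3 : v ≠ s.b j := by rintro rfl; exact h2 (s.hb j)
        simp [h2, h3]
    simp only [h1, Finset.sum_sub_distrib]
    have h5 := hsol j
    rw [row] at h5
    rw [← map_sum, h5]
    simp

lemma sum_fib {σ₁ σ₂ : Type*} [Fintype σ₁] [Fintype σ₂] (m : σ₁ × σ₂ → ℕ) (w : σ₁ → ℕ) :
    ∑ v : σ₁ × σ₂, m v * w v.1 = ∑ l, (∑ o, m (l, o)) * w l := by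
  rw [Fintype.sum_prod_type]
  simp only [Finset.sum_mul]

lemma raDegT (e : ℕ)
    (R : MvPolynomial (Fin (n + 1) × Option (V ⊕ Fin n ⊕ S)) k)
    (hRd : ∀ j, ∀ m ∈ R.support, rowDeg j m ≤ ∏ l, s.raD e (j.succAbove l)) (α) :
    (coeff α (aeval (fun v => (X v + C (s.raA a v) : MvPolynomial _ (Polynomial (MvPolynomial V k)))) R)).natDegree ≤ s.Δ := by
  classical
  refine Filt.translate (Filt.polyT (MvPolynomial V k)) ?_ (s.raA a)
    (fun v => if v = (Fin.last n, none) then 1 else 0) ?_ R s.Δ ?_ α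
  · intro c
    rw [Filt.mem_polyT, IsScalarTower.algebraMap_apply k (MvPolynomial V k),
      Polynomial.algebraMap_eq]
    simp
  · rintro ⟨l, o⟩
    rw [Filt.mem_polyT]
    refine Fin.lastCases ?_ (fun j => ?_) l
    · rcases o with _ | v | l | q
      · simp [raA, Polynomial.natDegree_X_le]
      · simp [raA]
      · simp [raA]
      · simp [raA]
    · rcases o with _ | v | l | q
      · simp [raA]
      · simp only [raA, Fin.lastCases_castSucc, Option.elim_some, Sum.elim_inl]
        split_ifs <;> simp
      · simp [raA]
      · simp [raA]
  · intro m hm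
    refine le_trans ?_ ((hRd (Fin.last n) m hm).trans (s.raD_prod_last e).le)
    rw [Finset.sum_eq_single (Fin.last n, none)]
    · simp only [if_true, mul_one, rowDeg]
      exact Finset.single_le_sum (f := fun o => m (Fin.last n, o)) (fun _ _ => Nat.zero_le _)
        (Finset.mem_univ none)
    · intro v _ hv
      simp [hv]
    · simp

lemma raDegC (e : ℕ)
    (R : MvPolynomial (Fin (n + 1) × Option (V ⊕ Fin n ⊕ S)) k)
    (hRd : ∀ j, ∀ m ∈ R.support, rowDeg j m ≤ ∏ l, s.raD e (j.succAbove l)) (μ : ℕ) (he : 1 ≤ e)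
    (ha : ∀ q, (a q).totalDegree ≤ μ) (α κ) :
    ((coeff α (aeval (fun v => (X v + C (s.raA a v) : MvPolynomial _ (Polynomial (MvPolynomial V k)))) R)).coeff κ).totalDegree ≤ n * (s.Δ * e) + s.Δ * μ := by
  classical
  revert κ
  refine Filt.translate ((Filt.td V k).polyC) ?_ (s.raA a)
    (fun v => if v.1 = Fin.last n then μ else 1) ?_ R _ ?_ α
  · intro c
    rw [IsScalarTower.algebraMap_apply k (MvPolynomial V k), Polynomial.algebraMap_eq]
    refine Filt.polyC_C _ ?_
    rw [Filt.mem_td, algebraMap_eq, totalDegree_C]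
  · rintro ⟨l, o⟩
    refine Fin.lastCases ?_ (fun j => ?_) l
    · rcases o with _ | v | l | q
      · simp only [raA, Fin.lastCases_last, Option.elim_none]
        rw [Filt.mem_polyC]
        intro κ
        rw [Filt.mem_td, Polynomial.coeff_X]
        split_ifs <;> simp
      · simp [raA]
      · simp [raA]
      · simp only [raA, Fin.lastCases_last, Option.elim_some, Sum.elim_inr, if_true]
        refine neg_mem (Filt.polyC_C _ ?_)
        rw [Filt.mem_td]; exact ha q
    · rcases o with _ | v | l | q
      · simp [raA]
      · simp only [raA, Fin.lastCases_castSucc, Option.elim_some, Sum.elim_inl,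
          if_neg (Fin.castSucc_ne_last j)]
        split_ifs
        · refine Filt.polyC_C _ ?_
          rw [Filt.mem_td]; simp [totalDegree_X]
        · exact zero_mem _
      · simp [raA]
      · simp [raA]
  · intro m hm
    rw [sum_fib (fun v => m v) (fun l => if l = Fin.last n then μ else 1), Fin.sum_univ_castSucc]
    refine add_le_add ?_ ?_
    · refine (Finset.sum_le_card_nsmul _ _ (s.Δ * e) fun j _ => ?_).trans (by simp)
      rw [if_neg (Fin.castSucc_ne_last j), mul_one]
      exact (hRd j.castSucc m hm).trans (s.raD_prod_cast e he j)
    · rw [if_pos rfl]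
      exact Nat.mul_le_mul_right _ ((hRd (Fin.last n) m hm).trans (s.raD_prod_last e).le)

theorem RA [Infinite k] (e μ : ℕ) (he : 1 ≤ e) (hφ : ∀ q, (φ q).totalDegree ≤ e)
    (ha : ∀ q, (a q).totalDegree ≤ μ)
    (hsol : s.IsSol p0 x0) (hx : IsUnit (aeval x0 s.h)) :
    ∃ r : Polynomial (MvPolynomial V k), r ≠ 0 ∧ r.natDegree ≤ s.Δ ∧
      (∀ κ, (r.coeff κ).totalDegree ≤ n * (s.Δ * e) + s.Δ * μ) ∧
      Polynomial.eval₂ ((aeval p0 : MvPolynomial V k →ₐ[k] E) : MvPolynomial V k →+* E)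
        (∑ q, aeval p0 (a q) * aeval x0 (φ q)) r = 0 := by
  classical
  have hu : ∃ u : V → E, ∀ j, u (s.b j) * aeval x0 (s.Φ (s.b j)) = 1 := by
    suffices hu : ∀ j, ∃ u, u * aeval x0 (s.Φ (s.b j)) = 1 by
      choose u' hu' using hu
      refine ⟨fun v => u' (s.ρ v), fun j => ?_⟩
      simp only [s.hb]; exact hu' j
    intro j
    obtain ⟨c, hc⟩ := s.hdvd j
    rw [hc, map_mul] at hx
    obtain ⟨u, hu⟩ := (isUnit_of_mul_isUnit_left hx).exists_left_inv
    exact ⟨u, hu⟩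
  obtain ⟨u, hu⟩ := hu
  obtain ⟨R, hR0, hRk, hRd⟩ := exists_resultant (s.raΦ φ) (s.raD e) (s.raD_pos e he)
    (s.raΦ_deg φ e hφ) (fun l => Sum.inr (Sum.inl l)) (s.raΦ_star φ e)
  have h1 : aeval (fun v => X v + s.raPsiT φ a p0 x0 u (s.raA a v)) R = 0 :=
    resPsi_vanish (s.raΦ φ) (fun v => X v + s.raPsiT φ a p0 x0 u (s.raA a v))
      (fun l => C (x0 l)) (s.raRow φ a p0 x0 u hu hsol) R hRk
  rw [← raPsiT_comp] at h1
  obtain ⟨α, h2, h3⟩ := lowest_order _ _ (s.raPsiT_const φ a p0 x0 u) _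
    (translate_ne_zero (s.raA a) R hR0) h1
  exact ⟨_, h2, s.raDegT a e R hRd α, s.raDegC a e R hRd μ he ha α, h3⟩
end Sys
end SysRA

section SysU
open MvPolynomial
namespace Sys
variable {k : Type*} [Field k] {n : ℕ} {V : Type*} (s : Sys k n V)

abbrev E0 : Type _ := Localization.Away (rename (Sum.inl : Fin n → Fin n ⊕ V) s.h)

noncomputable def ux (l : Fin n) : s.E0 := algebraMap (MvPolynomial (Fin n ⊕ V) k) s.E0 (X (Sum.inl l))
noncomputable def uq (v : V) : s.E0 := algebraMap (MvPolynomial (Fin n ⊕ V) k) s.E0 (X (Sum.inr v))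

open Classical in
noncomputable def up [Fintype V] (v : V) : s.E0 :=
  if s.b (s.ρ v) = v then
    -(∑ w, if s.ρ w = s.ρ v ∧ w ≠ v then s.uq w * aeval s.ux (s.Φ w) else 0) *
      Ring.inverse (aeval s.ux (s.Φ v))
  else s.uq v

lemma aeval_ux (f : MvPolynomial (Fin n) k) : aeval s.ux f =
    algebraMap (MvPolynomial (Fin n ⊕ V) k) s.E0 (rename Sum.inl f) := by
  induction f using MvPolynomial.induction_on with
  | C a =>
    rw [aeval_C, rename_C, IsScalarTower.algebraMap_apply k (MvPolynomial (Fin n ⊕ V) k) s.E0,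
      algebraMap_eq]
  | add p q hp hq => simp only [map_add, hp, hq]
  | mul_X p v hp => simp only [map_mul, hp, aeval_X, rename_X, ux]

instance : IsDomain s.E0 := by
  refine IsLocalization.isDomain_localization (M := Submonoid.powers _) ?_
  refine powers_le_nonZeroDivisors_of_noZeroDivisors ?_
  rw [Ne, map_eq_zero_iff _ (rename_injective _ Sum.inl_injective)]
  exact s.h0

lemma ux_unit : IsUnit (aeval s.ux s.h) := by
  rw [aeval_ux]
  exact IsLocalization.Away.algebraMap_isUnit _

lemma unit_b {B : Type*} [CommRing B] [Algebra k B] {x : Fin n → B} (hx : IsUnit (aeval x s.h)) (j) :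
    IsUnit (aeval x (s.Φ (s.b j))) := by
  obtain ⟨c, hc⟩ := s.hdvd j
  rw [hc, map_mul] at hx
  exact isUnit_of_mul_isUnit_left hx

lemma row_split [Fintype V] [DecidableEq V] {B : Type*} [CommRing B] [Algebra k B] (p : V → B)
    (x : Fin n → B) (j) :
    s.row p x j = p (s.b j) * aeval x (s.Φ (s.b j)) +
      ∑ w, if s.ρ w = j ∧ w ≠ s.b j then p w * aeval x (s.Φ w) else 0 := by
  rw [row, ← Finset.add_sum_erase _ _ (Finset.mem_univ (s.b j)), if_pos (s.hb j),
    ← Finset.add_sum_erase (a := s.b j) Finset.univ (fun w => if s.ρ w = j ∧ w ≠ s.b j then p w * aeval x (s.Φ w) else 0)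
      (Finset.mem_univ (s.b j)), if_neg (by simp), zero_add]
  congr 1
  refine Finset.sum_congr rfl fun w hw => ?_
  have : w ≠ s.b j := Finset.ne_of_mem_erase hw
  simp [this]

lemma up_sol [Fintype V] : s.IsSol s.up s.ux := by
  classical
  intro j
  rw [row_split]
  have h1 : ∀ w, s.ρ w = j ∧ w ≠ s.b j → s.up w = s.uq w := by
    rintro w ⟨rfl, h⟩
    rw [up, if_neg (fun h' => h h'.symm)]
  have h2 : ∀ w, (if s.ρ w = j ∧ w ≠ s.b j then s.up w * aeval s.ux (s.Φ w) else 0) =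
      if s.ρ w = j ∧ w ≠ s.b j then s.uq w * aeval s.ux (s.Φ w) else 0 := by
    intro w
    split_ifs with h
    · rw [h1 w h]
    · rfl
  simp only [h2]
  rw [up, if_pos (by rw [s.hb]), mul_assoc, Ring.inverse_mul_cancel _ (s.unit_b s.ux_unit j), s.hb,
    mul_one]
  rw [neg_add_eq_zero]

theorem universal [Fintype V] {B : Type*} [CommRing B] [Algebra k B] (p : V → B) (x : Fin n → B)
    (hsol : s.IsSol p x) (hx : IsUnit (aeval x s.h)) :
    ∃ χ : s.E0 →ₐ[k] B, (∀ v, χ (s.up v) = p v) ∧ ∀ l, χ (s.ux l) = x l := by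
  classical
  have hy : ∀ y : Submonoid.powers (rename (Sum.inl : Fin n → Fin n ⊕ V) s.h),
      IsUnit ((aeval (Sum.elim x p) : MvPolynomial (Fin n ⊕ V) k →ₐ[k] B) y) := by
    rintro ⟨_, m, rfl⟩
    simp only [map_pow, aeval_rename, Sum.elim_comp_inl]
    exact hx.pow m
  let χ : s.E0 →ₐ[k] B := IsLocalization.liftAlgHom hy
  have hχ : ∀ a, χ (algebraMap _ _ a) = aeval (Sum.elim x p) a := fun a =>
    IsLocalization.lift_eq _ a
  have h1 : ∀ l, χ (s.ux l) = x l := by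
    intro l; rw [ux, hχ]; simp
  have h2 : ∀ v, χ (s.uq v) = p v := by
    intro l; rw [uq, hχ]; simp
  have h3 : ∀ f : MvPolynomial (Fin n) k, χ (aeval s.ux f) = aeval x f := by
    intro f
    rw [aeval_ux, hχ, aeval_rename, Sum.elim_comp_inl]
  refine ⟨χ, fun v => ?_, h1⟩
  by_cases hv : s.b (s.ρ v) = v
  · have h4 := s.up_sol (s.ρ v)
    have h5 := hsol (s.ρ v)
    rw [row_split] at h4 h5
    have h6 := congrArg χ h4
    rw [map_zero, ← h5, map_add, map_mul, h3] at h6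
    have h7 : χ (∑ w, if s.ρ w = s.ρ v ∧ w ≠ s.b (s.ρ v) then s.up w * aeval s.ux (s.Φ w) else 0) =
        ∑ w, if s.ρ w = s.ρ v ∧ w ≠ s.b (s.ρ v) then p w * aeval x (s.Φ w) else 0 := by
      rw [map_sum]
      refine Finset.sum_congr rfl fun w _ => ?_
      split_ifs with h
      · rw [map_mul, h3, up, if_neg, h2]
        rw [h.1]; exact fun h' => h.2 h'.symm
      · exact map_zero _
    rw [h7] at h6
    have h8 := (s.unit_b hx (s.ρ v)).mul_right_cancel (add_right_cancel h6)
    rwa [hv] at h8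
  · rw [up, if_neg hv, h2]

end Sys
end SysU

section SysJ
open MvPolynomial
namespace Sys
variable {k : Type*} [Field k] {n : ℕ} {V : Type*} (s : Sys k n V)

section EV
variable {B : Type*} [CommRing B] [Algebra k B] (p : V → B) (x : Fin n → B)

noncomputable def pev : MvPolynomial V k →+* B := (aeval p : MvPolynomial V k →ₐ[k] B)
lemma pev_apply (a) : (pev p : MvPolynomial V k →+* B) a = aeval p a := rfl

noncomputable def ev : MvPolynomial (Fin n) (MvPolynomial V k) →+* B := eval₂Hom (pev p) x

noncomputable def evT (H : MvPolynomial (Fin n) (MvPolynomial V k)) :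
    Polynomial (MvPolynomial V k) →+* B := Polynomial.eval₂RingHom (pev p) (ev p x H)

lemma ev_map_C (φ : MvPolynomial (Fin n) k) :
    ev (V := V) p x (map C φ) = aeval x φ := eval₂Hom_map_C p x φ

lemma ev_C (a : MvPolynomial V k) : ev p x (C a) = aeval p a := by
  simp only [ev, eval₂Hom_C, pev_apply]
lemma ev_X (l) : ev (k := k) p x (X l) = x l := by
  simp only [ev, eval₂Hom_X']

lemma ev_sum (H : MvPolynomial (Fin n) (MvPolynomial V k)) : ev p x H =
    ∑ m : H.support, aeval p (coeff m.1 H) * aeval x (monomial m.1 (1 : k)) := by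
  rw [ev, coe_eval₂Hom, eval₂_eq', ← Finset.sum_coe_sort]
  refine Finset.sum_congr rfl fun m _ => ?_
  rw [pev_apply, aeval_monomial, map_one, one_mul, Finsupp.prod_fintype _ _ (by simp)]

variable {B' : Type*} [CommRing B'] [Algebra k B'] (χ : B →ₐ[k] B')

lemma pev_comp : (χ : B →+* B').comp (pev p : MvPolynomial V k →+* B) = pev (χ ∘ p) := by
  ext a
  · simp [pev_apply]
  · simp [pev_apply]

lemma ev_comp (H : MvPolynomial (Fin n) (MvPolynomial V k)) :
    χ (ev p x H) = ev (χ ∘ p) (χ ∘ x) H := by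
  rw [ev, ev, ← pev_comp]
  exact hom_eval₂ H (pev p) (χ : B →+* B') x

lemma evT_comp (H : MvPolynomial (Fin n) (MvPolynomial V k)) (r) :
    χ (evT p x H r) = evT (χ ∘ p) (χ ∘ x) H r := by
  rw [evT, evT, ← ev_comp, ← pev_comp]
  exact Polynomial.hom_eval₂ r (pev p) (χ : B →+* B') _
end EV

theorem transfer [Fintype V] {B : Type*} [CommRing B] [Algebra k B] {p : V → B} {x : Fin n → B}
    (hsol : s.IsSol p x) (hx : IsUnit (aeval x s.h)) {H : MvPolynomial (Fin n) (MvPolynomial V k)}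
    {r : Polynomial (MvPolynomial V k)} (hr : evT s.up s.ux H r = 0) :
    evT p x H r = 0 := by
  obtain ⟨χ, h1, h2⟩ := s.universal p x hsol hx
  have e1 : χ ∘ s.up = p := funext h1
  have e2 : χ ∘ s.ux = x := funext h2
  rw [← e1, ← e2, ← evT_comp, hr, map_zero]

theorem transfer_p [Fintype V] {B : Type*} [CommRing B] [Algebra k B] {p : V → B} {x : Fin n → B}
    (hsol : s.IsSol p x) (hx : IsUnit (aeval x s.h)) {c : MvPolynomial V k} (hr : aeval s.up c = 0) :
    aeval p c = 0 := by
  obtain ⟨χ, h1, h2⟩ := s.universal p x hsol hx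
  have e1 : χ ∘ s.up = p := funext h1
  have h3 := RingHom.congr_fun (pev_comp s.up χ) c
  rw [e1] at h3
  change χ (aeval s.up c) = aeval p c at h3
  rw [← h3, hr, map_zero]

theorem RAH [Fintype V] [Infinite k] (H : MvPolynomial (Fin n) (MvPolynomial V k)) (e μ : ℕ)
    (he : 1 ≤ e) (hH : H.totalDegree ≤ e) (hc : ∀ m, (coeff m H).totalDegree ≤ μ) :
    ∃ r : Polynomial (MvPolynomial V k), r ≠ 0 ∧ r.natDegree ≤ s.Δ ∧
      (∀ κ, (r.coeff κ).totalDegree ≤ n * (s.Δ * e) + s.Δ * μ) ∧ evT s.up s.ux H r = 0 := by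
  have hφ : ∀ m : H.support, (monomial m.1 (1 : k)).totalDegree ≤ e := by
    intro m
    rw [totalDegree_monomial _ one_ne_zero]
    exact (le_totalDegree m.2).trans hH
  obtain ⟨r, h1, h2, h3, h4⟩ := s.RA (fun m : H.support => monomial m.1 (1 : k))
    (fun m : H.support => coeff m.1 H) s.up s.ux e μ he hφ (fun m => hc _) s.up_sol s.ux_unit
  refine ⟨r, h1, h2, h3, ?_⟩
  rw [← ev_sum] at h4
  exact h4

/-! Jacobian -/
variable [Fintype V]
noncomputable def G (j : Fin n) : MvPolynomial (Fin n) (MvPolynomial V k) :=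
  ∑ v, if s.ρ v = j then C (X v) * map C (s.Φ v) else 0

noncomputable def Jm : Matrix (Fin n) (Fin n) (MvPolynomial (Fin n) (MvPolynomial V k)) :=
  Matrix.of fun j l => pderiv l (s.G j)

noncomputable def J : MvPolynomial (Fin n) (MvPolynomial V k) := s.Jm.det

noncomputable def Hh : MvPolynomial (Fin n) (MvPolynomial V k) := map C s.h * s.J

lemma ev_G {B : Type*} [CommRing B] [Algebra k B] (p : V → B) (x : Fin n → B) (j) :
    ev p x (s.G j) = s.row p x j := by
  rw [G, map_sum, row]
  refine Finset.sum_congr rfl fun v _ => ?_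
  split_ifs
  · rw [map_mul, ev_map_C, ev_C, aeval_X]
  · simp

lemma pderiv_G (j l) : pderiv l (s.G j) =
    ∑ v, if s.ρ v = j then C (X v) * map C (pderiv l (s.Φ v)) else 0 := by
  rw [G, map_sum]
  refine Finset.sum_congr rfl fun v _ => ?_
  split_ifs
  · rw [pderiv_C_mul, pderiv_map]
  · simp

lemma ev_pderiv_G {B : Type*} [CommRing B] [Algebra k B] (p : V → B) (x : Fin n → B) (j l) :
    ev p x (pderiv l (s.G j)) =
      ∑ v, if s.ρ v = j then p v * aeval x (pderiv l (s.Φ v)) else 0 := by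
  rw [pderiv_G, map_sum]
  refine Finset.sum_congr rfl fun v _ => ?_
  split_ifs
  · rw [map_mul, ev_map_C, ev_C, aeval_X]
  · simp

lemma taylor_dual {E : Type*} [CommRing E] [Algebra k E] (x v : Fin n → E)
    (φ : MvPolynomial (Fin n) k) :
    aeval (fun l => (TrivSqZeroExt.inl (x l) + TrivSqZeroExt.inr (v l) : DualNumber E)) φ =
      TrivSqZeroExt.inl (aeval x φ) + TrivSqZeroExt.inr (∑ l, aeval x (pderiv l φ) * v l) := by
  classical
  induction φ using MvPolynomial.induction_on with
  | C a =>
    rw [aeval_C, aeval_C]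
    simp [TrivSqZeroExt.algebraMap_eq_inl']
  | add p q hp hq =>
    simp only [map_add, hp, hq, add_mul, Finset.sum_add_distrib]
    ext <;> simp
  | mul_X p w hp =>
    simp only [map_mul, hp, aeval_X]
    ext
    · simp
    · simp only [pderiv_mul, pderiv_X, map_add, map_mul, aeval_X]
      have h1 : ∀ l, aeval x (Pi.single (M := fun _ => MvPolynomial (Fin n) k) l 1 w) * v l =
          if w = l then v l else 0 := by
        intro l
        rw [Pi.single_apply]
        split_ifs <;> simp
      simp only [add_mul, mul_assoc, Finset.sum_add_distrib, h1, ← Finset.mul_sum]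
      simp [mul_assoc, Finset.sum_mul, mul_comm (v _) (x w), add_comm]

lemma dual_sol (v : Fin n → s.E0) (hv : (s.Jm.map (ev s.up s.ux)).mulVec v = 0) :
    s.IsSol (fun w => (TrivSqZeroExt.inl (s.up w) : DualNumber s.E0))
      (fun l => TrivSqZeroExt.inl (s.ux l) + TrivSqZeroExt.inr (v l)) := by
  intro j
  have h1 := s.up_sol j
  have h2 := congrFun hv j
  rw [row] at h1 ⊢
  simp only [Matrix.mulVec, dotProduct, Matrix.map_apply, Jm, Matrix.of_apply, ev_pderiv_G,
    Pi.zero_apply, Finset.sum_mul] at h2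
  rw [Finset.sum_comm] at h2
  simp only [taylor_dual]
  ext
  · rw [TrivSqZeroExt.fst_sum, TrivSqZeroExt.fst_zero, ← h1]
    refine Finset.sum_congr rfl fun w _ => ?_
    split_ifs <;> simp
  · rw [TrivSqZeroExt.snd_sum, TrivSqZeroExt.snd_zero, ← h2]
    refine Finset.sum_congr rfl fun w _ => ?_
    split_ifs
    · simp [Finset.mul_sum, mul_assoc]
    · simp

lemma dual_unit (v : Fin n → s.E0) : IsUnit (aeval (fun l => (TrivSqZeroExt.inl (s.ux l) +
    TrivSqZeroExt.inr (v l) : DualNumber s.E0)) s.h) := by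
  rw [taylor_dual, TrivSqZeroExt.isUnit_iff_isUnit_fst]
  simpa using s.ux_unit

lemma pev_inl {E : Type*} [CommRing E] [Algebra k E] (p : V → E) (a : MvPolynomial V k) :
    pev (fun w => (TrivSqZeroExt.inl (p w) : DualNumber E)) a = TrivSqZeroExt.inl (pev p a) := by
  have := RingHom.congr_fun (pev_comp p (TrivSqZeroExt.inlAlgHom k E E)) a
  exact this.symm

lemma dual_eval {E : Type*} [CommRing E] [Algebra k E] (p : V → E) (x v : E)
    (r : Polynomial (MvPolynomial V k)) :
    Polynomial.eval₂ (pev (fun w => (TrivSqZeroExt.inl (p w) : DualNumber E)))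
      (TrivSqZeroExt.inl x + TrivSqZeroExt.inr v : DualNumber E) r =
    TrivSqZeroExt.inl (Polynomial.eval₂ (pev p) x r) +
      TrivSqZeroExt.inr (Polynomial.eval₂ (pev p) x (Polynomial.derivative r) * v) := by
  induction r using Polynomial.induction_on' with
  | add p q hp hq =>
    simp only [Polynomial.eval₂_add, hp, hq, Polynomial.derivative_add, add_mul]
    ext <;> simp
  | monomial m a =>
    rw [Polynomial.eval₂_monomial, Polynomial.eval₂_monomial, Polynomial.derivative_monomial,
      Polynomial.eval₂_monomial, pev_inl]
    ext
    · simp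
    · simp
      ring

/-- if all coordinates are algebraic (with small degree) then the Jacobian is generically nonzero -/
theorem J_ne_zero (hchar : ∀ N : ℕ, 1 ≤ N → N ≤ s.Δ → (N : k) ≠ 0)
    (hr : ∀ l, ∃ r : Polynomial (MvPolynomial V k), r.map (pev s.up) ≠ 0 ∧ r.natDegree ≤ s.Δ ∧
      evT s.up s.ux (X l) r = 0) : ev s.up s.ux s.J ≠ 0 := by
  classical
  intro hJ
  rw [J, RingHom.map_det, ← Matrix.exists_mulVec_eq_zero_iff] at hJ
  obtain ⟨v, hv0, hv⟩ := hJ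
  obtain ⟨l, hl⟩ : ∃ l, v l ≠ 0 := by
    by_contra h
    push Not at h
    exact hv0 (funext h)
  have hex : ∃ N, ∃ r : Polynomial (MvPolynomial V k), r.map (pev s.up) ≠ 0 ∧
      (r.map (pev s.up)).natDegree = N ∧ evT s.up s.ux (X l) r = 0 := by
    obtain ⟨r, h1, -, h3⟩ := hr l
    exact ⟨_, r, h1, rfl, h3⟩
  obtain ⟨r, h1, h2, h3⟩ := Nat.find_spec hex
  have hmin := fun {m} => Nat.find_min (m := m) hex
  have hle : Nat.find hex ≤ s.Δ := by
    obtain ⟨r, h1, h2, h3⟩ := hr l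
    exact (Nat.find_min' hex ⟨r, h1, rfl, h3⟩).trans
      (Polynomial.natDegree_map_le.trans h2)
  generalize Nat.find hex = N at *
  have hN : 1 ≤ N := by
    by_contra hN
    have hN : N = 0 := by omega
    rw [hN] at h2
    apply h1
    have h4 := Polynomial.eq_C_of_natDegree_eq_zero h2
    change Polynomial.eval₂ (pev s.up) (ev s.up s.ux (X l)) r = 0 at h3
    rw [← Polynomial.eval_map, h4, Polynomial.eval_C] at h3
    rw [h4, h3, Polynomial.C_0]
  have h5 := s.transfer (s.dual_sol v hv) (s.dual_unit v) h3
  change Polynomial.eval₂ _ (ev _ _ (X l)) r = 0 at h5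
  rw [ev_X, dual_eval] at h5
  have h6 := congrArg TrivSqZeroExt.snd h5
  simp only [TrivSqZeroExt.snd_add, TrivSqZeroExt.snd_inl, TrivSqZeroExt.snd_inr, zero_add,
    TrivSqZeroExt.snd_zero, mul_eq_zero, hl, or_false] at h6
  have h7 : (Polynomial.map (pev s.up) (Polynomial.derivative r)) ≠ 0 := by
    intro h0
    rw [← Polynomial.derivative_map] at h0
    have h8 := congrArg (fun q => Polynomial.coeff q (N - 1)) h0
    simp only [Polynomial.coeff_derivative, Polynomial.coeff_zero] at h8
    have h9 : N - 1 + 1 = N := by omega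
    rw [h9, mul_eq_zero] at h8
    rcases h8 with h8 | h8
    · apply h1
      rw [← Polynomial.leadingCoeff_eq_zero, Polynomial.leadingCoeff, h2, h8]
    · have h10 : ((N : ℕ) : s.E0) = 0 := by
        rw [← h8, ← Nat.cast_add_one, h9]
      rw [← map_natCast (algebraMap k s.E0), map_eq_zero] at h10
      exact hchar N hN hle h10
  refine hmin (m := (Polynomial.map (pev s.up) (Polynomial.derivative r)).natDegree) ?_
    ⟨Polynomial.derivative r, h7, rfl, ?_⟩
  · rw [← Polynomial.derivative_map]
    refine Polynomial.natDegree_derivative_lt (by omega) |>.trans_le h2.le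
  · change Polynomial.eval₂ _ (ev _ _ (X l)) _ = 0
    rw [ev_X]
    exact h6

/-- Cancelling powers of the variable. -/
lemma cancel_X {A : Type*} [CommRing A] (r : Polynomial A) (hr : r ≠ 0) :
    ∃ (a : ℕ) (q : Polynomial A), r = Polynomial.X ^ a * q ∧ q.coeff 0 ≠ 0 := by
  obtain ⟨q, h1, h2⟩ := Polynomial.exists_eq_pow_rootMultiplicity_mul_and_not_dvd r hr 0
  rw [Polynomial.C_0, sub_zero] at h1 h2
  exact ⟨_, q, h1, fun h => h2 (Polynomial.X_dvd_iff.2 h)⟩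

theorem RAH' [Infinite k] (H : MvPolynomial (Fin n) (MvPolynomial V k)) (e μ : ℕ)
    (he : 1 ≤ e) (hH : H.totalDegree ≤ e) (hc : ∀ m, (coeff m H).totalDegree ≤ μ)
    (hH0 : ev s.up s.ux H ≠ 0) :
    ∃ r : Polynomial (MvPolynomial V k), r.coeff 0 ≠ 0 ∧
      (∀ κ, (r.coeff κ).totalDegree ≤ n * (s.Δ * e) + s.Δ * μ) ∧ evT s.up s.ux H r = 0 := by
  obtain ⟨r, h1, h2, h3, h4⟩ := s.RAH H e μ he hH hc
  obtain ⟨a, q, rfl, h5⟩ := cancel_X r h1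
  refine ⟨q, h5, fun κ => ?_, ?_⟩
  · have := h3 (κ + a)
    rwa [Polynomial.coeff_X_pow_mul] at this
  · rw [map_mul, map_pow] at h4
    refine (mul_eq_zero.1 h4).resolve_left (pow_ne_zero _ ?_)
    simpa [evT] using hH0

/-! degree bounds -/
lemma Gd_coeff (j l m) : (coeff m (pderiv l (s.G j))).totalDegree ≤ 1 := by
  rw [pderiv_G, coeff_sum]
  refine (totalDegree_finset_sum _ _).trans (Finset.sup_le fun v _ => ?_)
  split_ifs
  · rw [coeff_C_mul, coeff_map]
    refine (totalDegree_mul _ _).trans ?_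
    rw [totalDegree_C, totalDegree_X]
  · simp

lemma G_deg (j) : (s.G j).totalDegree ≤ s.D j := by
  rw [G]
  refine (totalDegree_finset_sum _ _).trans (Finset.sup_le fun v _ => ?_)
  split_ifs with h
  · refine (totalDegree_mul _ _).trans ?_
    rw [totalDegree_C, zero_add]
    refine (totalDegree_map_le' _ _).trans ?_
    rw [← h]; exact s.hΦ v
  · simp

lemma totalDegree_pderiv_le {R σ : Type*} [CommRing R] (l : σ) (f : MvPolynomial σ R) :
    (pderiv l f).totalDegree ≤ f.totalDegree := by
  classical
  conv_lhs => rw [f.as_sum]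
  rw [map_sum]
  refine (totalDegree_finset_sum _ _).trans (Finset.sup_le fun m hm => ?_)
  rw [pderiv_monomial]
  refine (totalDegree_monomial_le _ _).trans ?_
  refine le_trans ?_ (le_totalDegree hm)
  exact Finsupp.sum_le_sum_index tsub_le_self (fun _ _ => monotone_id) (fun _ _ => rfl)

lemma J_deg : s.J.totalDegree ≤ ∑ j, s.D j := by
  rw [J, Matrix.det_apply]
  refine (totalDegree_finset_sum _ _).trans (Finset.sup_le fun σ _ => ?_)
  refine (totalDegree_smul_le _ _).trans ?_
  refine (totalDegree_finset_prod _ _).trans ?_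
  rw [← Equiv.sum_comp σ s.D]
  refine Finset.sum_le_sum fun l _ => ?_
  exact (totalDegree_pderiv_le _ _).trans (s.G_deg _)

lemma J_coeff (m) : (coeff m s.J).totalDegree ≤ n := by
  suffices h : s.J ∈ ((Filt.td V k).mv (Fin n)).F n from h m
  rw [J, Matrix.det_apply]
  refine sum_mem fun σ _ => ?_
  rw [Units.smul_def]
  refine zsmul_mem ?_ _
  have h1 := ((Filt.td V k).mv (Fin n)).prod_mem Finset.univ (fun i => s.Jm (σ i) i) (fun _ => 1)
    (fun l _ m => s.Gd_coeff _ _ m)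
  simpa using h1

lemma Hh_deg : s.Hh.totalDegree ≤ s.h.totalDegree + ∑ j, s.D j :=
  (totalDegree_mul _ _).trans (add_le_add (totalDegree_map_le' _ _) s.J_deg)

lemma Hh_coeff (m) : (coeff m s.Hh).totalDegree ≤ n := by
  suffices h : s.Hh ∈ ((Filt.td V k).mv (Fin n)).F n from h m
  have h1 : map C s.h ∈ ((Filt.td V k).mv (Fin n)).F 0 := by
    intro m
    rw [coeff_map, Filt.mem_td, totalDegree_C]
  have h2 := ((Filt.td V k).mv (Fin n)).mul_mem h1 (y := s.J) (b := n) s.J_coeff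
  rwa [zero_add] at h2
end Sys
end SysJ

section SysPc
open MvPolynomial
namespace Sys
variable {k : Type*} [Field k] {n : ℕ} {V : Type*} (s : Sys k n V) [Fintype V]

/-- good data, case (b) -/
structure Good (P : MvPolynomial V k) (r : Fin n → Polynomial (MvPolynomial V k))
    (rh : Polynomial (MvPolynomial V k)) : Prop where
  hP : P = (∏ l, (r l).leadingCoeff) * rh.coeff 0
  hr : ∀ l, evT s.up s.ux (X l) (r l) = 0
  hrh : evT s.up s.ux s.Hh rh = 0

theorem exists_P [Infinite k] (hchar : ∀ N : ℕ, 1 ≤ N → N ≤ s.Δ → (N : k) ≠ 0) :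
    ∃ P : MvPolynomial V k, P ≠ 0 ∧ P.totalDegree ≤
      n * s.Δ * (n + (s.h.totalDegree + ∑ j, s.D j + 1) + 1) ∧
      (aeval s.up P = 0 ∨ ∃ r rh, s.Good P r rh) := by
  have h1 : ∀ l : Fin n, ∃ r : Polynomial (MvPolynomial V k), r ≠ 0 ∧ r.natDegree ≤ s.Δ ∧
      (∀ κ, (r.coeff κ).totalDegree ≤ n * s.Δ) ∧ evT s.up s.ux (X l) r = 0 := by
    intro l
    obtain ⟨r, a, b, c, e⟩ := s.RAH (X l) 1 0 le_rfl (totalDegree_X _).le (by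
      intro m
      rw [coeff_X']
      split_ifs <;> simp)
    exact ⟨r, a, b, fun κ => by simpa using c κ, e⟩
  choose r r0 rdeg rco rev using h1
  by_cases hl : ∃ l, aeval s.up (r l).leadingCoeff = 0
  · obtain ⟨l, hl⟩ := hl
    refine ⟨(r l).leadingCoeff, Polynomial.leadingCoeff_ne_zero.2 (r0 l), (rco l _).trans ?_, Or.inl hl⟩
    nlinarith [Nat.zero_le (n * s.Δ * (n + (s.h.totalDegree + ∑ j, s.D j + 1)))]
  push Not at hl
  have hJ : ev s.up s.ux s.J ≠ 0 := by
    refine s.J_ne_zero hchar fun l => ⟨r l, ?_, rdeg l, rev l⟩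
    intro h
    apply hl l
    have := congrArg (fun q => Polynomial.coeff q (r l).natDegree) h
    simpa [Polynomial.coeff_map, pev_apply] using this
  have hH : ev s.up s.ux s.Hh ≠ 0 := by
    rw [Hh, map_mul, ev_map_C]
    exact mul_ne_zero s.ux_unit.ne_zero hJ
  obtain ⟨rh, h0, hc, he⟩ := s.RAH' s.Hh (s.h.totalDegree + ∑ j, s.D j + 1) n (by omega)
    (s.Hh_deg.trans (by omega)) s.Hh_coeff hH
  refine ⟨(∏ l, (r l).leadingCoeff) * rh.coeff 0, ?_, ?_, Or.inr ⟨r, rh, rfl, rev, he⟩⟩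
  · exact mul_ne_zero (Finset.prod_ne_zero_iff.2 fun l _ => Polynomial.leadingCoeff_ne_zero.2 (r0 l)) h0
  · refine (totalDegree_mul _ _).trans ?_
    have a1 : (∏ l, (r l).leadingCoeff).totalDegree ≤ n * (n * s.Δ) := by
      refine (totalDegree_finsetProd _ _).trans ?_
      refine (Finset.sum_le_sum fun l _ => rco l _).trans ?_
      simp
    have a2 := hc 0
    nlinarith
end Sys
end SysPc

section EtaleE1
open MvPolynomial
namespace EtB
variable {R : Type*} [CommRing R] {n : ℕ} (G : Fin n → MvPolynomial (Fin n) R) (H : MvPolynomial (Fin n) R)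

noncomputable def rel : (Fin n ⊕ Unit) → MvPolynomial (Fin n ⊕ Unit) R :=
  Sum.elim (fun j => rename Sum.inl (G j)) (fun _ => X (Sum.inr ()) * rename Sum.inl H - 1)

lemma rel_inl (j) : rel G H (Sum.inl j) = rename Sum.inl (G j) := rfl
lemma rel_inr (j) : rel G H (Sum.inr j) = X (Sum.inr ()) * rename Sum.inl H - 1 := rfl

abbrev Q : Type _ := MvPolynomial (Fin n ⊕ Unit) R ⧸ (Ideal.span (Set.range (rel G H)))

lemma rel_zero (j) : (Ideal.Quotient.mk (Ideal.span (Set.range (rel G H))) (rel G H j)) = 0 :=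
  Ideal.Quotient.eq_zero_iff_mem.2 (Ideal.subset_span ⟨j, rfl⟩)

lemma G_zero (j) : (Ideal.Quotient.mk (Ideal.span (Set.range (rel G H))) (rename Sum.inl (G j))) = 0 :=
  rel_zero G H (Sum.inl j)

lemma H_mul : (Ideal.Quotient.mk (Ideal.span (Set.range (rel G H))) (X (Sum.inr ()))) *
    (Ideal.Quotient.mk (Ideal.span (Set.range (rel G H))) (rename Sum.inl H)) = 1 := by
  have h := rel_zero G H (Sum.inr ())
  rw [← map_mul, ← sub_eq_zero, ← map_one (Ideal.Quotient.mk (Ideal.span (Set.range (rel G H)))), ← map_sub]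
  exact h

lemma H_unit : IsUnit (Ideal.Quotient.mk (Ideal.span (Set.range (rel G H))) (rename Sum.inl H)) := by
  exact IsUnit.of_mul_eq_one_right _ (H_mul G H)

lemma pderiv_rename_inr (f : MvPolynomial (Fin n) R) :
    pderiv (Sum.inr ()) (rename (Sum.inl : Fin n → Fin n ⊕ Unit) f) = 0 := by
  refine pderiv_eq_zero_of_notMem_vars ?_
  intro h
  classical
  have := vars_rename _ _ h
  simp at this

noncomputable def pre : Algebra.PreSubmersivePresentation R (Q G H) (Fin n ⊕ Unit) (Fin n ⊕ Unit) :=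
  Algebra.PreSubmersivePresentation.naive (v := rel G H) id Function.injective_id

lemma pre_jac (hJ : (Matrix.of fun j l => pderiv l (G j)).det ∣ H) : IsUnit (pre G H).jacobian := by
  classical
  rw [Algebra.PreSubmersivePresentation.jacobian_eq_jacobiMatrix_det]
  have h1 : (pre G H).jacobiMatrix = Matrix.fromBlocks
      (Matrix.of fun l j => rename Sum.inl (pderiv l (G j)))
      (Matrix.of fun l _ => pderiv (Sum.inl l) (rel G H (Sum.inr ())))
      0 (Matrix.of fun _ _ => rename Sum.inl H) := by
    ext1 a b
    rw [pre, Algebra.PreSubmersivePresentation.jacobiMatrix_naive]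
    rcases a with a | a <;> rcases b with b | b
    · simp only [rel_inl, id, Matrix.fromBlocks_apply₁₁, Matrix.of_apply]
      exact pderiv_rename Sum.inl_injective a _
    · rfl
    · simp only [rel_inl, id, Matrix.fromBlocks_apply₂₁, Matrix.zero_apply]
      exact pderiv_rename_inr _
    · simp only [rel_inr, id, Matrix.fromBlocks_apply₂₂, Matrix.of_apply]
      rw [map_sub, pderiv_mul, pderiv_rename_inr, pderiv_X_self, pderiv_one]
      simp
  have h2 : (pre G H).jacobiMatrix.det = rename Sum.inl ((Matrix.of fun j l => pderiv l (G j)).det * H) := by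
    rw [h1, Matrix.det_fromBlocks_zero₂₁, map_mul]
    congr 1
    · rw [← Matrix.det_transpose, AlgHom.map_det]
      rfl
    · simp
  rw [h2]
  have h3 : ∀ f : MvPolynomial (Fin n ⊕ Unit) R, algebraMap (pre G H).Ring (Q G H) f =
      Ideal.Quotient.mk _ f := by
    intro f
    rfl
  rw [h3, map_mul, map_mul]
  refine IsUnit.mul ?_ (H_unit G H)
  obtain ⟨c, hc⟩ := hJ
  have := H_unit G H
  rw [hc, map_mul, map_mul] at this
  rw [hc]
  exact isUnit_of_mul_isUnit_left this

theorem etale (hJ : (Matrix.of fun j l => pderiv l (G j)).det ∣ H) : Algebra.Etale R (Q G H) := by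
  have : Algebra.IsStandardSmoothOfRelativeDimension 0 R (Q G H) :=
    Algebra.SubmersivePresentation.isStandardSmoothOfRelativeDimension
      ⟨pre G H, pre_jac G H hJ⟩ (by simp [Algebra.Presentation.dimension])
  infer_instance

variable {G H}
section pts
variable {K : Type*} [Field K] [Algebra R K]

lemma hom_aeval (φ : Q G H →ₐ[R] K) (f : MvPolynomial (Fin n) R) :
    aeval (fun l => φ (Ideal.Quotient.mk (Ideal.span (Set.range (rel G H))) (X (Sum.inl l)))) f =
        φ (Ideal.Quotient.mk (Ideal.span (Set.range (rel G H))) (rename Sum.inl f)) := by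
  induction f using MvPolynomial.induction_on with
  | C a =>
    rw [aeval_C, rename_C]
    exact (φ.commutes a).symm
  | add p q hp hq => simp only [map_add, hp, hq]
  | mul_X p v hp => simp only [map_mul, hp, aeval_X, rename_X]

lemma lft_aux (x : Fin n → K) (h1 : ∀ j, aeval x (G j) = 0) (h2 : aeval x H ≠ 0) :
    ∀ a ∈ Ideal.span (Set.range (rel G H)), (aeval (Sum.elim x fun _ => (aeval x H)⁻¹) :
      MvPolynomial (Fin n ⊕ Unit) R →ₐ[R] K) a = 0 := by
  intro a ha
  have : Ideal.span (Set.range (rel G H)) ≤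
      RingHom.ker (aeval (Sum.elim x fun _ => (aeval x H)⁻¹) : MvPolynomial (Fin n ⊕ Unit) R →ₐ[R] K) := by
    rw [Ideal.span_le]
    rintro _ ⟨j, rfl⟩
    simp only [SetLike.mem_coe, RingHom.mem_ker]
    rcases j with j | j
    · rw [rel_inl, aeval_rename]
      exact h1 j
    · simp only [rel_inr, map_sub, map_mul, aeval_X, aeval_rename, map_one, Sum.elim_inr]
      rw [show (Sum.elim x fun _ => (aeval x H)⁻¹) ∘ Sum.inl = x from rfl,
        inv_mul_cancel₀ h2, sub_self]
  exact this ha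

noncomputable def lft (x : Fin n → K) (h1 : ∀ j, aeval x (G j) = 0) (h2 : aeval x H ≠ 0) :
    Q G H →ₐ[R] K :=
  Ideal.Quotient.liftₐ _ (aeval (Sum.elim x fun _ => (aeval x H)⁻¹)) (lft_aux x h1 h2)

lemma lft_mk (x : Fin n → K) (h1 : ∀ j, aeval x (G j) = 0) (h2 : aeval x H ≠ 0)
    (f : MvPolynomial (Fin n ⊕ Unit) R) :
    lft x h1 h2 (Ideal.Quotient.mk (Ideal.span (Set.range (rel G H))) f) =
      aeval (Sum.elim x fun _ => (aeval x H)⁻¹) f := rfl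

noncomputable def pt (φ : Q G H →ₐ[R] K) (l : Fin n) : K :=
  φ (Ideal.Quotient.mk (Ideal.span (Set.range (rel G H))) (X (Sum.inl l)))

lemma pt1 (φ : Q G H →ₐ[R] K) (j) : aeval (pt φ) (G j) = 0 := by
  unfold pt
  rw [hom_aeval, G_zero, map_zero]

lemma pt2 (φ : Q G H →ₐ[R] K) : aeval (pt φ) H ≠ 0 := by
  unfold pt
  rw [hom_aeval]
  exact ((H_unit G H).map φ).ne_zero

lemma lft_pt (φ : Q G H →ₐ[R] K) : lft (pt φ) (pt1 φ) (pt2 φ) = φ := by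
  refine Ideal.Quotient.algHom_ext _ ?_
  refine MvPolynomial.algHom_ext fun j => ?_
  change lft (pt φ) (pt1 φ) (pt2 φ) (Ideal.Quotient.mk (Ideal.span (Set.range (rel G H))) (X j)) =
    φ (Ideal.Quotient.mk (Ideal.span (Set.range (rel G H))) (X j))
  rw [lft_mk, aeval_X]
  rcases j with j | j
  · rfl
  · have h := congrArg φ (H_mul G H)
    rw [map_mul, map_one] at h
    have h2 := eq_inv_of_mul_eq_one_left h
    rw [← hom_aeval] at h2
    exact h2.symm

lemma pt_lft (x : Fin n → K) (h1 : ∀ j, aeval x (G j) = 0) (h2 : aeval x H ≠ 0) :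
    pt (lft x h1 h2) = x := by
  funext l
  rw [pt, lft_mk, aeval_X]
  rfl

/-- points -/
noncomputable def homEquiv : (Q G H →ₐ[R] K) ≃
    {x : Fin n → K // (∀ j, aeval x (G j) = 0) ∧ aeval x H ≠ 0} where
  toFun φ := ⟨pt φ, pt1 φ, pt2 φ⟩
  invFun x := lft x.1 x.2.1 x.2.2
  left_inv φ := lft_pt φ
  right_inv x := Subtype.ext (pt_lft x.1 x.2.1 x.2.2)
end pts
end EtB
end EtaleE1

section EtaleE2
open scoped TensorProduct

lemma card_algHom_finite_etale {K A : Type*} [Field K] [IsAlgClosed K] [CommRing A] [Algebra K A]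
    [Algebra.Etale K A] [Module.Finite K A] : Finite (A →ₐ[K] K) ∧ Nat.card (A →ₐ[K] K) = Module.finrank K A := by
  have hfs : Algebra.IsFiniteSplit K A := by infer_instance
  have e := Algebra.IsFiniteSplit.algHomEquivPrimeSpectrum K A
  have e2 := Algebra.FormallyEtale.equivPiOfIsSepClosed K A
  have : IsArtinianRing A := IsArtinianRing.of_finite K A
  have hfin : Finite (PrimeSpectrum A) := inferInstance
  have := Fintype.ofFinite (PrimeSpectrum A)
  refine ⟨Finite.of_equiv _ e.symm, ?_⟩
  rw [Nat.card_congr e, e2.toLinearEquiv.finrank_eq, Module.finrank_pi, Nat.card_eq_fintype_card]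

theorem card_const {R B : Type*} [CommRing R] [IsDomain R] [CommRing B] [Algebra R B]
    [Algebra.Etale R B] [Module.Finite R B] (K : Type*) [Field K] [IsAlgClosed K] [Algebra R K] :
    Finite (B →ₐ[R] K) ∧ Nat.card (B →ₐ[R] K) = Module.rankAtStalk (R := R) B ⊥ := by
  have e := Algebra.TensorProduct.liftEquivRight R K B K
  have h := card_algHom_finite_etale (K := K) (A := K ⊗[R] B)
  have := h.1
  refine ⟨Finite.of_equiv _ e.symm, ?_⟩
  rw [Nat.card_congr e, h.2]
  have hf : Module.Flat R B := Algebra.Smooth.flat R B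
  have h1 := Module.rankAtStalk_baseChange (R := R) (M := B) (S := K) ⊥
  rw [Module.rankAtStalk_eq_finrank_of_free] at h1
  rw [Module.rankAtStalk_eq_of_le_of_finite_of_flat (R := R) B (p := ⊥)
    (q := PrimeSpectrum.comap (algebraMap R K) ⊥) bot_le, ← h1]
  rfl
end EtaleE2

section EtaleE3
open MvPolynomial

lemma isIntegral_of_unit_lead {A R B : Type*} [CommRing A] [CommRing R] [Nontrivial R] [CommRing B]
    [Algebra R B] (φ : A →+* R) (r : Polynomial A) (b : B) (hu : IsUnit (φ r.leadingCoeff))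
    (hr : Polynomial.eval₂ ((algebraMap R B).comp φ) b r = 0) : IsIntegral R b := by
  obtain ⟨c, hc⟩ := hu.exists_left_inv
  refine ⟨Polynomial.C c * r.map φ, ?_, ?_⟩
  · refine Polynomial.monic_C_mul_of_mul_leadingCoeff_eq_one ?_
    rw [Polynomial.leadingCoeff_map_of_leadingCoeff_ne_zero _ hu.ne_zero, hc]
  · rw [Polynomial.eval₂_mul, Polynomial.eval₂_map, hr, mul_zero]

lemma isIntegral_inv {A R B : Type*} [CommRing A] [CommRing R] [Nontrivial R] [CommRing B]
    [Algebra R B] (φ : A →+* R) (r : Polynomial A) (b w : B) (hw : w * b = 1)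
    (hu : IsUnit (φ (r.coeff 0)))
    (hr : Polynomial.eval₂ ((algebraMap R B).comp φ) b r = 0) : IsIntegral R w := by
  have h0 : r.coeff 0 ≠ 0 := by
    intro h
    rw [h, map_zero] at hu
    exact hu.ne_zero rfl
  refine isIntegral_of_unit_lead φ r.reverse w ?_ ?_
  · rw [Polynomial.reverse_leadingCoeff, Polynomial.trailingCoeff,
      Polynomial.natTrailingDegree_eq_zero.2 (Or.inr h0)]
    exact hu
  · let _ : Invertible b := ⟨w, hw, by rw [mul_comm]; exact hw⟩
    have h := Polynomial.eval₂_reverse_mul_pow ((algebraMap R B).comp φ) b r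
    rw [hr] at h
    have hb : IsUnit (b ^ r.natDegree) := (isUnit_of_invertible b).pow _
    exact (hb.mul_left_eq_zero).1 h

namespace EtB
lemma finite_of_integral {R : Type*} [CommRing R] {n : ℕ} (G : Fin n → MvPolynomial (Fin n) R)
    (H : MvPolynomial (Fin n) R)
    (h : ∀ j, IsIntegral R (Ideal.Quotient.mk (Ideal.span (Set.range (rel G H))) (X j) : Q G H)) :
    Module.Finite R (Q G H) := by
  have : Algebra.IsIntegral R (Q G H) := by
    refine ⟨fun b => ?_⟩
    obtain ⟨f, rfl⟩ := Ideal.Quotient.mk_surjective b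
    induction f using MvPolynomial.induction_on with
    | C a => exact isIntegral_algebraMap (R := R) (A := Q G H) (x := a)
    | add p q hp hq => rw [map_add]; exact hp.add hq
    | mul_X p v hp => rw [map_mul]; exact hp.mul (h v)
  exact Algebra.IsIntegral.finite
end EtB

namespace Sys
variable {k : Type*} [Field k] {n : ℕ} {V : Type*} (s : Sys k n V) [Fintype V]

section
variable (P : MvPolynomial V k)
abbrev RP : Type _ := Localization.Away P
noncomputable def gP (j : Fin n) : MvPolynomial (Fin n) (RP P) := map (algebraMap _ _) (s.G j)
noncomputable def hP : MvPolynomial (Fin n) (RP P) := map (algebraMap _ _) s.Hh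
abbrev QP : Type _ := EtB.Q (s.gP P) (s.hP P)

lemma etaleP : Algebra.Etale (RP P) (s.QP P) := by
  refine EtB.etale _ _ ?_
  have h : (Matrix.of fun j l => pderiv l (s.gP P j)).det =
      map (algebraMap (MvPolynomial V k) (RP P)) s.J := by
    rw [J, RingHom.map_det]
    congr 1
    ext1 j l
    simp only [Matrix.of_apply, gP, RingHom.mapMatrix_apply, Matrix.map_apply, Jm, pderiv_map]
  rw [h, hP, Hh, map_mul]
  exact dvd_mul_left _ _

noncomputable def qp (v : V) : s.QP P := algebraMap (RP P) (s.QP P) (algebraMap (MvPolynomial V k) _ (X v))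
noncomputable def qx (l : Fin n) : s.QP P := Ideal.Quotient.mk _ (X (Sum.inl l))

lemma pev_qp : (pev (s.qp P) : MvPolynomial V k →+* s.QP P) =
    (algebraMap (RP P) (s.QP P)).comp (algebraMap (MvPolynomial V k) (RP P)) := by
  refine MvPolynomial.ringHom_ext (fun a => ?_) (fun v => ?_)
  · rw [pev_apply, aeval_C, RingHom.comp_apply]
    rw [IsScalarTower.algebraMap_apply k (RP P) (s.QP P),
      IsScalarTower.algebraMap_apply k (MvPolynomial V k) (RP P)]
    rfl
  · rw [pev_apply, aeval_X]
    rfl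

lemma ev_q (f : MvPolynomial (Fin n) (MvPolynomial V k)) : ev (s.qp P) (s.qx P) f =
    Ideal.Quotient.mk _ (rename Sum.inl (map (algebraMap _ (RP P)) f)) := by
  induction f using MvPolynomial.induction_on with
  | C a =>
    rw [ev_C, ← pev_apply, pev_qp, map_C, rename_C]
    rfl
  | add p q hp hq => simp only [map_add, hp, hq]
  | mul_X p v hp =>
    simp only [map_mul, hp, map_X, rename_X, ev_X]
    rfl

lemma q_sol : s.IsSol (s.qp P) (s.qx P) := by
  intro j
  rw [← ev_G, ev_q]
  exact EtB.G_zero (s.gP P) (s.hP P) j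

lemma q_unit : IsUnit (aeval (s.qx P) s.h) := by
  have h := EtB.H_unit (s.gP P) (s.hP P)
  replace h : IsUnit (ev (s.qp P) (s.qx P) s.Hh) := by
    rw [ev_q]
    exact h
  rw [Hh, map_mul, ev_map_C] at h
  exact isUnit_of_mul_isUnit_left h

variable {P} {r : Fin n → Polynomial (MvPolynomial V k)} {rh : Polynomial (MvPolynomial V k)}

lemma finiteP (hP0 : P ≠ 0) (hg : s.Good P r rh) : Module.Finite (RP P) (s.QP P) := by
  have : IsDomain (RP P) := IsLocalization.isDomain_localization (M := Submonoid.powers _)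
    (powers_le_nonZeroDivisors_of_noZeroDivisors hP0)
  have hu : IsUnit (algebraMap (MvPolynomial V k) (RP P) P) := IsLocalization.Away.algebraMap_isUnit _
  have hPe := congrArg (algebraMap (MvPolynomial V k) (RP P)) hg.hP
  rw [map_mul, map_prod] at hPe
  rw [hPe, IsUnit.mul_iff, IsUnit.prod_univ_iff] at hu
  refine EtB.finite_of_integral _ _ fun j => ?_
  rcases j with l | j
  · refine isIntegral_of_unit_lead (algebraMap (MvPolynomial V k) (RP P)) (r l) _ (hu.1 l) ?_
    have h := s.transfer (s.q_sol P) (s.q_unit P) (hg.hr l)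
    rw [evT, ev_X, pev_qp] at h
    exact h
  · refine isIntegral_inv (algebraMap (MvPolynomial V k) (RP P)) rh _ _ (EtB.H_mul _ _) hu.2 ?_
    have h := s.transfer (s.q_sol P) (s.q_unit P) hg.hrh
    rw [evT, ev_q, pev_qp] at h
    exact h

/-- constant coefficient nonvanishing -/
lemma Hh_ne_zero (hg : s.Good P r rh) {p : V → k} {x : Fin n → k} (hP : aeval p P ≠ 0)
    (hev : evT p x s.Hh rh = 0) : ev p x s.Hh ≠ 0 := by
  intro h
  rw [evT, h] at hev
  apply hP
  rw [hg.hP, map_mul]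
  have : aeval p (rh.coeff 0) = 0 := by
    simpa [Polynomial.eval₂_at_zero, pev_apply] using hev
  rw [this, mul_zero]

theorem count [IsAlgClosed k] (hP0 : P ≠ 0) (hg : s.Good P r rh) : ∃ g : ℕ, ∀ p : V → k, aeval p P ≠ 0 →
    {x : Fin n → k | s.IsSol p x ∧ aeval x s.h ≠ 0}.Finite ∧
    {x : Fin n → k | s.IsSol p x ∧ aeval x s.h ≠ 0}.ncard = g := by
  have : IsDomain (RP P) := IsLocalization.isDomain_localization (M := Submonoid.powers _)
    (powers_le_nonZeroDivisors_of_noZeroDivisors hP0)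
  have := s.etaleP P
  have := s.finiteP hP0 hg
  refine ⟨Module.rankAtStalk (R := RP P) (s.QP P) ⊥, fun p hp => ?_⟩
  let _ : Algebra (RP P) k := (IsLocalization.Away.lift P (g := (pev p : MvPolynomial V k →+* k))
    (hp.isUnit)).toAlgebra
  have hcomp : (algebraMap (RP P) k).comp (algebraMap (MvPolynomial V k) (RP P)) = pev p :=
    IsLocalization.Away.lift_comp P hp.isUnit
  have hev : ∀ (x : Fin n → k) (f : MvPolynomial (Fin n) (MvPolynomial V k)),
      aeval x (map (algebraMap (MvPolynomial V k) (RP P)) f) = ev p x f := by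
    intro x f
    rw [aeval_def, eval₂_map, hcomp]
    rfl
  obtain ⟨h1, h2⟩ := card_const (R := RP P) (B := s.QP P) k
  have e := EtB.homEquiv (G := s.gP P) (H := s.hP P) (K := k)
  have hset : {x : Fin n → k | s.IsSol p x ∧ aeval x s.h ≠ 0} =
      {x : Fin n → k | (∀ j, aeval x (s.gP P j) = 0) ∧ aeval x (s.hP P) ≠ 0} := by
    ext x
    simp only [Set.mem_ofPred_eq, gP, hP, hev, ev_G]
    refine and_congr_right fun hx => ⟨fun h => ?_, fun h h0 => h ?_⟩
    · exact s.Hh_ne_zero hg hp (s.transfer hx h.isUnit hg.hrh)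
    · rw [Hh, map_mul, ev_map_C, h0, zero_mul]
  rw [hset]
  have hfin := Finite.of_equiv _ e
  refine ⟨Set.finite_coe_iff.1 hfin, ?_⟩
  rw [← h2, Nat.card_congr e]
  rfl
end
end Sys
end EtaleE3

section Deform
open MvPolynomial

lemma aeval_homog {k B : Type*} [CommRing k] [CommRing B] [Algebra k B] {σ : Type*} {f : MvPolynomial σ k}
    {D : ℕ} (hf : f.IsHomogeneous D) (c : B) (y : σ → B) :
    aeval (fun l => c * y l) f = c ^ D * aeval y f := by
  rw [aeval_def, aeval_def, eval₂_eq, eval₂_eq, Finset.mul_sum]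
  refine Finset.sum_congr rfl fun m hm => ?_
  have h := hf (mem_support_iff.1 hm)
  rw [Finsupp.weight_apply] at h
  simp only [Pi.one_apply, smul_eq_mul, mul_one, Finsupp.sum] at h
  simp only [mul_pow, Finset.prod_mul_distrib]
  rw [Finset.prod_pow_eq_pow_sum, h]
  ring

noncomputable def dehom {k : Type*} [CommRing k] {n : ℕ} (f : MvPolynomial (Fin (n + 1)) k) :
    MvPolynomial (Fin n) k := aeval (Fin.cons 1 X : Fin (n + 1) → MvPolynomial (Fin n) k) f

lemma aeval_dehom {k B : Type*} [CommRing k] [CommRing B] [Algebra k B] {n : ℕ}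
    (f : MvPolynomial (Fin (n + 1)) k) (x : Fin n → B) :
    aeval x (dehom f) = aeval (Fin.cons 1 x : Fin (n + 1) → B) f := by
  rw [dehom, comp_aeval_apply]
  have : (fun i => aeval x ((Fin.cons 1 X : Fin (n + 1) → MvPolynomial (Fin n) k) i)) =
      (Fin.cons 1 x : Fin (n + 1) → B) := by
    funext i
    refine Fin.cases ?_ (fun l => ?_) i
    · simp
    · simp
  rw [this]

lemma aeval_dehom_div {k K : Type*} [CommRing k] [Field K] [Algebra k K] {n : ℕ}
    {f : MvPolynomial (Fin (n + 1)) k} {D : ℕ} (hf : f.IsHomogeneous D) (y : Fin (n + 1) → K)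
    (h0 : y 0 ≠ 0) :
    aeval y f = y 0 ^ D * aeval (fun l => y l.succ / y 0) (dehom f) := by
  rw [aeval_dehom, ← aeval_homog hf]
  congr 2
  funext l
  refine Fin.cases ?_ (fun l => ?_) l
  · simp
  · simp only [Fin.cons_succ]
    field_simp

lemma dehom_deg {k : Type*} [CommRing k] {n : ℕ} (f : MvPolynomial (Fin (n + 1)) k) :
    (dehom f).totalDegree ≤ f.totalDegree := by
  rw [dehom, aeval_def, eval₂_eq]
  refine totalDegree_finsetSum_le fun m hm => ?_
  refine (totalDegree_mul _ _).trans ?_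
  refine le_trans (b := 0 + ∑ l ∈ m.support, m l) (add_le_add ?_ ?_) ?_
  · exact (totalDegree_C _).le
  · refine (totalDegree_finsetProd _ _).trans (Finset.sum_le_sum fun l _ => ?_)
    refine (totalDegree_pow _ _).trans ?_
    have hl : ((Fin.cons 1 X : Fin (n + 1) → MvPolynomial (Fin n) k) l).totalDegree ≤ 1 := by
      refine Fin.cases ?_ (fun l => ?_) l
      · simp
      · rw [Fin.cons_succ]
        exact (totalDegree_monomial_le _ _).trans (by simp)
    exact (Nat.mul_le_mul_left (m l) hl).trans (mul_one _).le
  · rw [zero_add]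
    exact le_totalDegree hm

namespace Sys
variable {k : Type*} [Field k] {n : ℕ} {V : Type*} (s : Sys k n V) [Fintype V]

open Classical in
noncomputable def pdef (t : Fin n → V) (y : Fin (n + 1) → k) (Ψ : V → MvPolynomial (Fin (n + 1)) k)
    (yε : Fin (n + 1) → Polynomial k) (p : V → k) (v : V) : Polynomial k :=
  Polynomial.C (aeval y (Ψ (t (s.ρ v))))⁻¹ *
    (if v = t (s.ρ v) then -∑ w, (if s.ρ w = s.ρ v ∧ w ≠ v then Polynomial.C (p w) * aeval yε (Ψ w) else 0)
     else aeval yε (Ψ (t (s.ρ v))) * Polynomial.C (p v))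

lemma sum_split [DecidableEq V] {B : Type*} [CommRing B] (j : Fin n) (t : V) (ht : s.ρ t = j) (f : V → B) :
    (∑ v, if s.ρ v = j then f v else 0) = f t + ∑ w, if s.ρ w = j ∧ w ≠ t then f w else 0 := by
  rw [← Finset.add_sum_erase _ _ (Finset.mem_univ t), if_pos ht,
    ← Finset.add_sum_erase (a := t) Finset.univ (fun w => if s.ρ w = j ∧ w ≠ t then f w else 0)
      (Finset.mem_univ t), if_neg (by simp), zero_add]
  congr 1
  refine Finset.sum_congr rfl fun w hw => ?_
  have : w ≠ t := Finset.ne_of_mem_erase hw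
  simp [this]

theorem deform [Infinite k] (Ψ : V → MvPolynomial (Fin (n + 1)) k)
    (hΨ : ∀ v, (Ψ v).IsHomogeneous (s.D (s.ρ v))) (hΦ : ∀ v, s.Φ v = dehom (Ψ v))
    (Θ : MvPolynomial (Fin (n + 1)) k) (δ : ℕ) (hΘ : Θ.IsHomogeneous δ) (hh : s.h = dehom Θ)
    (p : V → k) (y : Fin (n + 1) → k)
    (hy : ∀ j, (∑ v, if s.ρ v = j then p v * aeval y (Ψ v) else 0) = 0)
    (ht : ∀ j, ∃ v, s.ρ v = j ∧ aeval y (Ψ v) ≠ 0) :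
    ∃ (pε : V → Polynomial k) (yε : Fin (n + 1) → Polynomial k),
      (∀ v, (pε v).eval 0 = p v) ∧ (∀ l, (yε l).eval 0 = y l) ∧ (y 0 = 1 → yε 0 = 1) ∧ yε 0 ≠ 0 ∧
      s.IsSol (fun v => algebraMap (Polynomial k) (FractionRing (Polynomial k)) (pε v))
        (fun l => algebraMap (Polynomial k) (FractionRing (Polynomial k)) (yε l.succ) /
          algebraMap (Polynomial k) (FractionRing (Polynomial k)) (yε 0)) ∧
      IsUnit (aeval (fun l => algebraMap (Polynomial k) (FractionRing (Polynomial k)) (yε l.succ) /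
          algebraMap (Polynomial k) (FractionRing (Polynomial k)) (yε 0)) s.h) := by
  classical
  choose t ht1 ht2 using ht
  obtain ⟨z, hz⟩ : ∃ z : Fin n → k, aeval z s.h ≠ 0 := by
    by_contra hcon
    push Not at hcon
    apply s.h0
    refine MvPolynomial.funext fun z => ?_
    have := hcon z
    rw [map_zero]
    exact this
  set Z : Fin (n + 1) → k := Fin.cons 1 z with hZ
  have hZh : aeval Z Θ ≠ 0 := by
    rw [hh, aeval_dehom] at hz
    exact hz
  set yε : Fin (n + 1) → Polynomial k :=
    fun l => Polynomial.C (y l) + Polynomial.X * Polynomial.C (Z l - y l) with hyε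
  have hev : ∀ (c : k) (f : MvPolynomial (Fin (n + 1)) k), (aeval yε f).eval c =
      aeval (fun l => (yε l).eval c) f := by
    intro c f
    have := comp_aeval_apply (f := yε) (Polynomial.aeval c : Polynomial k →ₐ[k] k) f
    rw [Polynomial.coe_aeval_eq_eval] at this
    exact this
  have he0 : (fun l => (yε l).eval 0) = y := by
    funext l
    simp [hyε]
  have he1 : (fun l => (yε l).eval 1) = Z := by
    funext l
    simp [hyε]
  have hy0 : yε 0 ≠ 0 := by
    intro h
    have := congrFun he1 0
    simp [h, hZ] at this
  have hK0 : algebraMap (Polynomial k) (FractionRing (Polynomial k)) (yε 0) ≠ 0 := by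
    rw [Ne, map_eq_zero_iff _ (IsFractionRing.injective _ _)]
    exact hy0
  -- comparison
  have hcmp : ∀ {f : MvPolynomial (Fin (n + 1)) k} {D : ℕ}, f.IsHomogeneous D →
      aeval (fun l => algebraMap (Polynomial k) (FractionRing (Polynomial k)) (yε l.succ) /
          algebraMap (Polynomial k) (FractionRing (Polynomial k)) (yε 0)) (dehom f) =
      (algebraMap (Polynomial k) (FractionRing (Polynomial k)) (yε 0) ^ D)⁻¹ *
        algebraMap (Polynomial k) (FractionRing (Polynomial k)) (aeval yε f) := by
    intro f D hf
    have h1 := aeval_dehom_div hf (fun l => algebraMap (Polynomial k) (FractionRing (Polynomial k)) (yε l)) hK0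
    have h2 := comp_aeval_apply (f := yε)
      (IsScalarTower.toAlgHom k (Polynomial k) (FractionRing (Polynomial k))) f
    simp only [IsScalarTower.coe_toAlgHom'] at h2
    rw [h2, h1, inv_mul_cancel_left₀ (pow_ne_zero _ hK0)]
  refine ⟨s.pdef t y Ψ yε p, yε, ?_, fun l => congrFun he0 l, ?_, hy0, ?_, ?_⟩
  · intro v
    rw [pdef, Polynomial.eval_mul, Polynomial.eval_C]
    split_ifs with hv
    · have h1 := hy (s.ρ v)
      rw [s.sum_split (s.ρ v) v rfl] at h1
      have h2 : aeval y (Ψ v) ≠ 0 := by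
        have := ht2 (s.ρ v)
        rwa [← hv] at this
      rw [← hv]
      rw [inv_mul_eq_iff_eq_mul₀ h2, Polynomial.eval_neg, Polynomial.eval_finsetSum, mul_comm,
        eq_neg_of_add_eq_zero_left h1]
      congr 1
      refine Finset.sum_congr rfl fun w _ => ?_
      split_ifs
      · rw [Polynomial.eval_mul, Polynomial.eval_C, hev, he0]
      · simp
    · rw [Polynomial.eval_mul, hev, he0, Polynomial.eval_C, inv_mul_cancel_left₀ (ht2 _)]
  · intro h1
    simp [hyε, hZ, h1]
  · intro j
    have hrow : (∑ v, if s.ρ v = j then s.pdef t y Ψ yε p v * aeval yε (Ψ v) else 0) = 0 := by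
      rw [s.sum_split j (t j) (ht1 j)]
      have h1 : s.pdef t y Ψ yε p (t j) = Polynomial.C (aeval y (Ψ (t j)))⁻¹ *
          -∑ w, (if s.ρ w = j ∧ w ≠ t j then Polynomial.C (p w) * aeval yε (Ψ w) else 0) := by
        rw [pdef, ht1, if_pos rfl]
      have h2 : (∑ w, if s.ρ w = j ∧ w ≠ t j then s.pdef t y Ψ yε p w * aeval yε (Ψ w) else 0) =
          Polynomial.C (aeval y (Ψ (t j)))⁻¹ * aeval yε (Ψ (t j)) *
          ∑ w, (if s.ρ w = j ∧ w ≠ t j then Polynomial.C (p w) * aeval yε (Ψ w) else 0) := by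
        rw [Finset.mul_sum]
        refine Finset.sum_congr rfl fun w _ => ?_
        split_ifs with hw
        · rw [pdef, hw.1, if_neg hw.2]
          ring
        · simp
      rw [h1, h2]
      ring
    rw [row]
    have h3 : ∀ v, (if s.ρ v = j then algebraMap (Polynomial k) (FractionRing (Polynomial k)) (s.pdef t y Ψ yε p v) *
        aeval (fun l => algebraMap (Polynomial k) (FractionRing (Polynomial k)) (yε l.succ) /
          algebraMap (Polynomial k) (FractionRing (Polynomial k)) (yε 0)) (s.Φ v) else 0) =
        (algebraMap (Polynomial k) (FractionRing (Polynomial k)) (yε 0) ^ s.D j)⁻¹ *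
        algebraMap (Polynomial k) (FractionRing (Polynomial k))
          (if s.ρ v = j then s.pdef t y Ψ yε p v * aeval yε (Ψ v) else 0) := by
      intro v
      split_ifs with hv
      · rw [hΦ, hcmp (hΨ v), hv, map_mul]
        ring
      · simp
    rw [Finset.sum_congr rfl fun v _ => h3 v, ← Finset.mul_sum, ← map_sum, hrow, map_zero, mul_zero]
  · rw [hh, hcmp hΘ, isUnit_iff_ne_zero]
    refine mul_ne_zero (inv_ne_zero (pow_ne_zero _ hK0)) ?_
    rw [Ne, map_eq_zero_iff _ (IsFractionRing.injective _ _)]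
    intro h
    apply hZh
    rw [← he1, ← hev, h, Polynomial.eval_zero]
end Sys
end Deform

section Deform2
open MvPolynomial

lemma homog_rel {K A : Type*} [Field K] [CommRing A] (φ : A →+* K) (r : Polynomial A) (a b : K) (hb : b ≠ 0)
    (h : Polynomial.eval₂ φ (a / b) r = 0) :
    ∑ κ ∈ Finset.range (r.natDegree + 1), φ (r.coeff κ) * (a ^ κ * b ^ (r.natDegree - κ)) = 0 := by
  rw [Polynomial.eval₂_eq_sum_range] at h
  have := congrArg (fun q => q * b ^ r.natDegree) h
  simp only [zero_mul, Finset.sum_mul] at this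
  rw [← this]
  refine Finset.sum_congr rfl fun κ hκ => ?_
  have hle : κ ≤ r.natDegree := Nat.lt_succ_iff.1 (Finset.mem_range.1 hκ)
  have : b ^ r.natDegree = b ^ κ * b ^ (r.natDegree - κ) := by rw [← pow_add, Nat.add_sub_cancel' hle]
  rw [this, div_pow]
  have := pow_ne_zero κ hb
  field_simp

namespace Sys
variable {k : Type*} [Field k] {n : ℕ} {V : Type*} (s : Sys k n V) [Fintype V]

structure HData (Ψ : V → MvPolynomial (Fin (n + 1)) k) (Θ : MvPolynomial (Fin (n + 1)) k) (δ : ℕ) : Prop where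
  hΨ : ∀ v, (Ψ v).IsHomogeneous (s.D (s.ρ v))
  hΦ : ∀ v, s.Φ v = dehom (Ψ v)
  hΘ : Θ.IsHomogeneous δ
  hh : s.h = dehom Θ

structure HPt (Ψ : V → MvPolynomial (Fin (n + 1)) k) (p : V → k) (y : Fin (n + 1) → k) : Prop where
  hy : ∀ j, (∑ v, if s.ρ v = j then p v * aeval y (Ψ v) else 0) = 0
  ht : ∀ j, ∃ v, s.ρ v = j ∧ aeval y (Ψ v) ≠ 0

variable {s} [Infinite k] {Ψ : V → MvPolynomial (Fin (n + 1)) k} {Θ : MvPolynomial (Fin (n + 1)) k} {δ : ℕ}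
  {p : V → k} {y : Fin (n + 1) → k}

abbrev FK (k : Type*) [Field k] := FractionRing (Polynomial k)
noncomputable abbrev iK (k : Type*) [Field k] : Polynomial k →ₐ[k] FK k :=
  IsScalarTower.toAlgHom k (Polynomial k) (FractionRing (Polynomial k))

lemma iK_inj : Function.Injective (iK k) := IsFractionRing.injective (Polynomial k) (FK k)

lemma aeval_pev0 {pε : V → Polynomial k} (h : ∀ v, (pε v).eval 0 = p v) (c : MvPolynomial V k) :
    (aeval pε c).eval 0 = aeval p c := by
  have := comp_aeval_apply (f := pε) (Polynomial.aeval (0 : k) : Polynomial k →ₐ[k] k) c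
  rw [Polynomial.coe_aeval_eq_eval] at this
  rw [this, funext h]

theorem conseq_a (hd : s.HData Ψ Θ δ) (hp : s.HPt Ψ p y) {c : MvPolynomial V k} (hc : aeval s.up c = 0) : aeval p c = 0 := by
  obtain ⟨pε, yε, h1, h2, h3, h4, h5, h6⟩ := s.deform Ψ hd.hΨ hd.hΦ Θ δ hd.hΘ hd.hh p y hp.hy hp.ht
  have h := s.transfer_p h5 h6 hc
  have h' := comp_aeval_apply (f := pε) (iK k) c
  rw [← aeval_pev0 h1]
  have : aeval pε c = 0 := by
    apply iK_inj
    rw [map_zero, h']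
    exact h
  rw [this, Polynomial.eval_zero]

theorem conseq_b (hd : s.HData Ψ Θ δ) (hp : s.HPt Ψ p y) {l : Fin n} {r : Polynomial (MvPolynomial V k)} (hr : evT s.up s.ux (X l) r = 0)
    (hlead : aeval p r.leadingCoeff ≠ 0) (h0 : y 0 = 0) : y l.succ = 0 := by
  obtain ⟨pε, yε, h1, h2, h3, h4, h5, h6⟩ := s.deform Ψ hd.hΨ hd.hΦ Θ δ hd.hΘ hd.hh p y hp.hy hp.ht
  have h := s.transfer h5 h6 hr
  rw [evT, ev_X] at h
  have hb : algebraMap (Polynomial k) (FK k) (yε 0) ≠ 0 := by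
    rw [Ne, map_eq_zero_iff _ (IsFractionRing.injective _ _)]
    exact h4
  have h := homog_rel _ r _ _ hb h
  have h7 : ∑ κ ∈ Finset.range (r.natDegree + 1),
      aeval pε (r.coeff κ) * (yε l.succ ^ κ * yε 0 ^ (r.natDegree - κ)) = 0 := by
    apply iK_inj
    rw [map_zero, ← h, map_sum]
    refine Finset.sum_congr rfl fun κ _ => ?_
    rw [map_mul, map_mul, map_pow, map_pow, comp_aeval_apply, pev_apply]
    rfl
  have h8 := congrArg (Polynomial.eval 0) h7
  rw [Polynomial.eval_finsetSum, Finset.sum_range_succ, Finset.sum_eq_zero] at h8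
  · simp only [Polynomial.eval_mul, Polynomial.eval_pow, Polynomial.eval_zero, aeval_pev0 h1, h2,
      Nat.sub_self, pow_zero, mul_one, zero_add] at h8
    exact eq_zero_of_pow_eq_zero ((mul_eq_zero.1 h8).resolve_left hlead)
  · intro κ hκ
    have : r.natDegree - κ ≠ 0 := by
      have := Finset.mem_range.1 hκ
      omega
    simp only [Polynomial.eval_mul, Polynomial.eval_pow, h2, h0]
    rw [zero_pow this]
    simp

theorem conseq_c (hd : s.HData Ψ Θ δ) (hp : s.HPt Ψ p y) {H : MvPolynomial (Fin n) (MvPolynomial V k)} {r : Polynomial (MvPolynomial V k)}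
    (hr : evT s.up s.ux H r = 0) (hy1 : y 0 = 1) :
    evT p (fun l => y l.succ) H r = 0 := by
  obtain ⟨pε, yε, h1, h2, h3, h4, h5, h6⟩ := s.deform Ψ hd.hΨ hd.hΦ Θ δ hd.hΘ hd.hh p y hp.hy hp.ht
  have h := s.transfer h5 h6 hr
  simp only [h3 hy1, map_one, div_one] at h
  have h7 := evT_comp pε (fun l => yε l.succ) (iK k) H r
  have h8 : evT pε (fun l => yε l.succ) H r = 0 := by
    apply iK_inj
    rw [map_zero, h7]
    exact h
  have h9 := evT_comp pε (fun l => yε l.succ) (Polynomial.aeval (0 : k) : Polynomial k →ₐ[k] k) H r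
  rw [h8, map_zero] at h9
  have e1 : (Polynomial.aeval (0 : k) : Polynomial k →ₐ[k] k) ∘ pε = p := by
    funext v
    rw [Function.comp_apply, Polynomial.coe_aeval_eq_eval, h1]
  have e2 : ((Polynomial.aeval (0 : k) : Polynomial k →ₐ[k] k) ∘ fun l : Fin n => yε l.succ) =
      fun l => y l.succ := by
    funext v
    rw [Function.comp_apply, Polynomial.coe_aeval_eq_eval, h2]
  rw [e1, e2] at h9
  exact h9.symm

lemma HPt.smul (hd : s.HData Ψ Θ δ) (hp : s.HPt Ψ p y) {c : k} (hc : c ≠ 0) : s.HPt Ψ p (fun l => c * y l) := by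
  refine ⟨fun j => ?_, fun j => ?_⟩
  · have : ∀ v, (if s.ρ v = j then p v * aeval (fun l => c * y l) (Ψ v) else 0) =
        c ^ s.D j * (if s.ρ v = j then p v * aeval y (Ψ v) else 0) := by
      intro v
      split_ifs with hv
      · rw [aeval_homog (hd.hΨ v), hv]
        ring
      · simp
    rw [Finset.sum_congr rfl fun v _ => this v, ← Finset.mul_sum, hp.hy, mul_zero]
  · obtain ⟨v, h1, h2⟩ := hp.ht j
    refine ⟨v, h1, ?_⟩
    rw [aeval_homog (hd.hΨ v)]
    exact mul_ne_zero (pow_ne_zero _ hc) h2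

/-- final conclusion on points, case (b) -/
theorem conseq (hd : s.HData Ψ Θ δ) (hp : s.HPt Ψ p y) {P} {r rh} (hg : s.Good P r rh) (hP : aeval p P ≠ 0) (hy0 : y ≠ 0) :
    y 0 ≠ 0 ∧ aeval y Θ ≠ 0 := by
  have hP' := hP
  rw [hg.hP, map_mul, map_prod] at hP'
  have hl : ∀ l, aeval p (r l).leadingCoeff ≠ 0 := fun l =>
    Finset.prod_ne_zero_iff.1 (left_ne_zero_of_mul hP') l (Finset.mem_univ _)
  have h0 : y 0 ≠ 0 := by
    intro h0
    apply hy0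
    funext l
    refine Fin.cases h0 (fun l => ?_) l
    exact conseq_b hd hp (hg.hr l) (hl l) h0
  refine ⟨h0, ?_⟩
  have hp2 := HPt.smul hd hp (inv_ne_zero h0)
  have h1 := conseq_c hd hp2 hg.hrh (inv_mul_cancel₀ h0)
  have h2 := s.Hh_ne_zero hg hP h1
  rw [Hh, map_mul, ev_map_C, hd.hh, aeval_dehom] at h2
  have h3 := left_ne_zero_of_mul h2
  intro h4
  apply h3
  have : (Fin.cons 1 fun l : Fin n => (y 0)⁻¹ * y l.succ : Fin (n + 1) → k) = fun l => (y 0)⁻¹ * y l := by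
    funext l
    refine Fin.cases ?_ (fun l => ?_) l
    · simp [inv_mul_cancel₀ h0]
    · simp
  rw [this, aeval_homog hd.hΘ, h4, mul_zero]
end Sys
end Deform2

section MainSys
open MvPolynomial
namespace Sys
variable {k : Type*} [Field k] {n : ℕ} {V : Type*} [Fintype V]

noncomputable def affPt (x : Fin n → k) : Projectivization k (Fin (n + 1) → k) :=
  Projectivization.mk k (Fin.cons 1 x : Fin (n + 1) → k) (fun h => by
    have := congrFun h 0
    simp at this)

lemma affPt_inj : Function.Injective (affPt : (Fin n → k) → _) := by
  intro x x' h
  rw [affPt, affPt, Projectivization.mk_eq_mk_iff'] at h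
  obtain ⟨a, ha⟩ := h
  have h0 := congrFun ha 0
  simp at h0
  subst h0
  funext l
  have := congrFun ha l.succ
  simpa using this.symm

lemma affPt_rep (x : Fin n → k) : ∃ a : k, a ≠ 0 ∧ (affPt x).rep = fun l => a * (Fin.cons 1 x : Fin (n + 1) → k) l := by
  obtain ⟨a, ha⟩ := Projectivization.exists_smul_eq_mk_rep k (Fin.cons 1 x : Fin (n + 1) → k) (fun h => by
    have := congrFun h 0
    simp at this)
  exact ⟨a, a.ne_zero, ha.symm⟩

lemma cons_inv {y : Fin (n + 1) → k} (h0 : y 0 ≠ 0) :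
    (Fin.cons 1 fun l : Fin n => (y 0)⁻¹ * y l.succ : Fin (n + 1) → k) = fun l => (y 0)⁻¹ * y l := by
  funext l
  refine Fin.cases ?_ (fun l => ?_) l
  · simp [inv_mul_cancel₀ h0]
  · simp

theorem main_sys [IsAlgClosed k] (s : Sys k n V) {Ψ : V → MvPolynomial (Fin (n + 1)) k}
    {Θ : MvPolynomial (Fin (n + 1)) k} {δ : ℕ}
    (hd : s.HData Ψ Θ δ) (hchar : ∀ N : ℕ, 1 ≤ N → N ≤ s.Δ → (N : k) ≠ 0) :
    ∃ (P : MvPolynomial V k) (g : ℕ), P ≠ 0 ∧ P.totalDegree ≤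
      n * s.Δ * (n + (s.h.totalDegree + ∑ j, s.D j + 1) + 1) ∧
      ∀ p : V → k, aeval p P ≠ 0 → ∀ S : Set (Projectivization k (Fin (n + 1) → k)),
        (∀ x ∈ S, s.HPt Ψ p x.rep) → (∀ x, s.HPt Ψ p x.rep → aeval x.rep Θ ≠ 0 → x ∈ S) →
        S.Finite ∧ S.ncard = g ∧ ∀ x ∈ S, x.rep 0 ≠ 0 := by
  have : Infinite k := IsAlgClosed.instInfinite
  obtain ⟨P, hP0, hPd, h⟩ := s.exists_P hchar
  rcases h with h | ⟨r, rh, hg⟩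
  · refine ⟨P, 0, hP0, hPd, fun p hp S hS _ => ?_⟩
    have : S = ∅ := by
      rw [Set.eq_empty_iff_forall_notMem]
      intro x hx
      exact hp (conseq_a hd (hS x hx) h)
    subst this
    simp
  · obtain ⟨g, hcount⟩ := s.count hP0 hg
    refine ⟨P, g, hP0, hPd, fun p hp S hS hS' => ?_⟩
    obtain ⟨hfin, hcard⟩ := hcount p hp
    have himg : S = affPt '' {x : Fin n → k | s.IsSol p x ∧ aeval x s.h ≠ 0} := by
      ext x
      constructor
      · intro hx
        have hpt := hS x hx
        obtain ⟨h0, hT⟩ := conseq hd hpt hg hp x.rep_nonzero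
        have hpt2 := HPt.smul hd hpt (inv_ne_zero h0)
        refine ⟨fun l => (x.rep 0)⁻¹ * x.rep l.succ, ⟨fun j => ?_, ?_⟩, ?_⟩
        · have h1 := hpt2.hy j
          rw [row]
          refine Eq.trans ?_ h1
          refine Finset.sum_congr rfl fun v _ => ?_
          rw [hd.hΦ, aeval_dehom, cons_inv h0]
        · rw [hd.hh, aeval_dehom, cons_inv h0, aeval_homog hd.hΘ]
          exact mul_ne_zero (pow_ne_zero _ (inv_ne_zero h0)) hT
        · conv_rhs => rw [← x.mk_rep]
          rw [affPt, Projectivization.mk_eq_mk_iff']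
          exact ⟨(x.rep 0)⁻¹, (cons_inv h0).symm⟩
      · rintro ⟨x, ⟨h1, h2⟩, rfl⟩
        obtain ⟨a, ha, hrep⟩ := affPt_rep x
        have hpt : s.HPt Ψ p (Fin.cons 1 x : Fin (n + 1) → k) := by
          refine ⟨fun j => ?_, fun j => ⟨s.b j, s.hb j, ?_⟩⟩
          · have h3 := h1 j
            rw [row] at h3
            refine Eq.trans ?_ h3
            refine Finset.sum_congr rfl fun v _ => ?_
            rw [hd.hΦ, aeval_dehom]
          · rw [← aeval_dehom, ← hd.hΦ]
            exact (s.unit_b h2.isUnit j).ne_zero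
        refine hS' _ ?_ ?_
        · rw [hrep]
          exact HPt.smul hd hpt ha
        · rw [hrep, aeval_homog hd.hΘ, ← aeval_dehom, ← hd.hh]
          exact mul_ne_zero (pow_ne_zero _ ha) h2
    refine ⟨?_, ?_, ?_⟩
    · rw [himg]
      exact hfin.image _
    · rw [himg, Set.ncard_image_of_injective _ affPt_inj, hcard]
    · intro x hx
      exact (conseq hd (hS x hx) hg hp x.rep_nonzero).1
end Sys
end MainSys

section Concrete
open MvPolynomial
namespace PDeg
variable {k : Type*} [Field k] {n m d i : ℕ}

abbrev VV (n m i : ℕ) := (Fin (n - i) × Fin (n + 1)) ⊕ (Fin i × Fin (m + 1))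

def rowE (hin : i ≤ n) : Fin (n - i) ⊕ Fin i ≃ Fin n :=
  finSumFinEquiv.trans (finCongr (Nat.sub_add_cancel hin))

noncomputable def Psi (F : Fin (m + 1) → MvPolynomial (Fin (n + 1)) k) :
    VV n m i → MvPolynomial (Fin (n + 1)) k :=
  Sum.elim (fun v => X v.2) (fun v => F v.2)

def DD (d : ℕ) (hin : i ≤ n) (j : Fin n) : ℕ := Sum.elim (fun _ => 1) (fun _ => d) ((rowE hin).symm j)

def rhoV (hin : i ≤ n) : VV n m i → Fin n :=
  Sum.elim (fun v => rowE hin (Sum.inl v.1)) (fun v => rowE hin (Sum.inr v.1))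

def bV (hin : i ≤ n) (j : Fin n) : VV n m i :=
  Sum.elim (fun a => Sum.inl (a, 0)) (fun a => Sum.inr (a, 0)) ((rowE hin).symm j)

lemma Psi_hom (F : Fin (m + 1) → MvPolynomial (Fin (n + 1)) k) (hF : ∀ j, (F j).IsHomogeneous d)
    (hin : i ≤ n) (v : VV n m i) : (Psi F v).IsHomogeneous (DD d hin (rhoV hin v)) := by
  rcases v with v | v
  · simp only [Psi, rhoV, DD, Sum.elim_inl, Equiv.symm_apply_apply]
    exact isHomogeneous_X _ _
  · simp only [Psi, rhoV, DD, Sum.elim_inr, Equiv.symm_apply_apply]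
    exact hF _

lemma dehom_ne_zero [Infinite k] {f : MvPolynomial (Fin (n + 1)) k} (hf : f.IsHomogeneous d) (h0 : f ≠ 0) :
    dehom f ≠ 0 := by
  intro h
  have h1 : X 0 * f = 0 := by
    refine MvPolynomial.funext fun y => ?_
    rw [map_mul, map_zero, eval_X]
    by_cases hy : y 0 = 0
    · rw [hy, zero_mul]
    · have := aeval_dehom_div hf y hy
      rw [h, map_zero, mul_zero] at this
      change _ * aeval y f = 0
      rw [this, mul_zero]
  exact h0 ((mul_eq_zero.1 h1).resolve_left (X_ne_zero _))

noncomputable def sys [Infinite k] (F : Fin (m + 1) → MvPolynomial (Fin (n + 1)) k)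
    (hF : ∀ j, (F j).IsHomogeneous d) (hF0 : F 0 ≠ 0) (hin : i ≤ n) (hdi : 1 ≤ d ∨ i = 0) :
    Sys k n (VV n m i) where
  ρ := rhoV hin
  Φ v := dehom (Psi F v)
  D := DD d hin
  hD j := by
    unfold DD
    rcases (rowE hin).symm j with a | a
    · simp
    · rcases hdi with h | h
      · simpa using h
      · subst h
        exact a.elim0
  hΦ v := (dehom_deg _).trans (Psi_hom F hF hin v).totalDegree_le
  b := bV hin
  hb j := by
    obtain ⟨a, rfl⟩ := (rowE hin).surjective j
    rcases a with a | a <;> simp [bV, rhoV]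
  h := dehom (F 0)
  h0 := dehom_ne_zero (hF 0) hF0
  hdvd j := by
    obtain ⟨a, rfl⟩ := (rowE hin).surjective j
    rcases a with a | a
    · simp [bV, Psi, dehom]
    · simp [bV, Psi]

section
variable [Infinite k] (F : Fin (m + 1) → MvPolynomial (Fin (n + 1)) k)
    (hF : ∀ j, (F j).IsHomogeneous d) (hF0 : F 0 ≠ 0) (hin : i ≤ n) (hdi : 1 ≤ d ∨ i = 0)

lemma sys_hd : (sys F hF hF0 hin hdi).HData (Psi F) (F 0) d :=
  ⟨Psi_hom F hF hin, fun _ => rfl, hF 0, rfl⟩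

lemma sys_Δ : (sys F hF hF0 hin hdi).Δ = d ^ i := by
  change ∏ j, DD d hin j = _
  rw [← (rowE hin).prod_comp, Fintype.prod_sum_type]
  simp [DD]

lemma sys_sumD : ∑ j, (sys F hF hF0 hin hdi).D j = (n - i) + i * d := by
  change ∑ j, DD d hin j = _
  rw [← (rowE hin).sum_comp, Fintype.sum_sum_type]
  simp [DD]

lemma sys_h : (sys F hF hF0 hin hdi).h.totalDegree ≤ d :=
  (dehom_deg _).trans (hF 0).totalDegree_le

lemma hpt_iff (l : Fin (n - i) → Fin (n + 1) → k) (lhat : Fin i → Fin (m + 1) → k)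
    (y : Fin (n + 1) → k) (hy : y ≠ 0) :
    (sys F hF hF0 hin hdi).HPt (Psi F)
      (Sum.elim (fun p => l p.1 p.2) (fun p => lhat p.1 p.2)) y ↔
    (∀ j, ∑ t, l j t * y t = 0) ∧ (∀ j, ∑ t, lhat j t * eval y (F t) = 0) ∧
      (Nonempty (Fin i) → ∃ t, eval y (F t) ≠ 0) := by
  have hsumL : ∀ j : Fin (n - i), (∑ v : VV n m i, if rhoV hin v = rowE hin (Sum.inl j) then
      (Sum.elim (fun p => l p.1 p.2) (fun p => lhat p.1 p.2) : VV n m i → k) v * aeval y (Psi F v) else 0) =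
      ∑ t, l j t * y t := by
    intro j
    rw [Fintype.sum_sum_type, Fintype.sum_prod_type, Fintype.sum_prod_type]
    simp only [rhoV, Psi, Sum.elim_inl, Sum.elim_inr, EmbeddingLike.apply_eq_iff_eq, Sum.inl.injEq,
      reduceCtorEq, if_false, Finset.sum_const_zero, add_zero, aeval_X]
    rw [Finset.sum_eq_single j]
    · simp
    · intro b _ hb
      simp [hb]
    · simp
  have hsumR : ∀ j : Fin i, (∑ v : VV n m i, if rhoV hin v = rowE hin (Sum.inr j) then
      (Sum.elim (fun p => l p.1 p.2) (fun p => lhat p.1 p.2) : VV n m i → k) v * aeval y (Psi F v) else 0) =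
      ∑ t, lhat j t * eval y (F t) := by
    intro j
    rw [Fintype.sum_sum_type, Fintype.sum_prod_type, Fintype.sum_prod_type]
    simp only [rhoV, Psi, Sum.elim_inl, Sum.elim_inr, EmbeddingLike.apply_eq_iff_eq, Sum.inr.injEq,
      reduceCtorEq, if_false, Finset.sum_const_zero, zero_add]
    rw [Finset.sum_eq_single j]
    · simp only [if_true]
      rfl
    · intro b _ hb
      simp [hb]
    · simp
  constructor
  · rintro ⟨h1, h2⟩
    refine ⟨fun j => ?_, fun j => ?_, ?_⟩
    · rw [← hsumL]
      exact h1 _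
    · rw [← hsumR]
      exact h1 _
    · rintro ⟨j⟩
      obtain ⟨v, hv, hv2⟩ := h2 (rowE hin (Sum.inr j))
      rcases v with v | v
      · change rowE hin _ = _ at hv
        simp at hv
      · exact ⟨v.2, hv2⟩
  · rintro ⟨h1, h2, h3⟩
    refine ⟨fun j => ?_, fun j => ?_⟩
    · obtain ⟨a, rfl⟩ := (rowE hin).surjective j
      rcases a with a | a
      · exact (hsumL a).trans (h1 a)
      · exact (hsumR a).trans (h2 a)
    · obtain ⟨a, rfl⟩ := (rowE hin).surjective j
      rcases a with a | a
      · obtain ⟨t, ht⟩ := Function.ne_iff.1 hy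
        refine ⟨Sum.inl (a, t), rfl, ?_⟩
        simpa [Psi] using ht
      · obtain ⟨t, ht⟩ := h3 ⟨a⟩
        exact ⟨Sum.inr (a, t), rfl, ht⟩
end

lemma two_pow_ge (n : ℕ) : n + 1 ≤ 2 ^ n := Nat.lt_two_pow_self

lemma deg_arith (n m d i h : ℕ) (him : i ≤ m) (hin : i ≤ n) (hdi : 1 ≤ d ∨ i = 0) (hh : h ≤ d) :
    n * d ^ i * (n + (h + ((n - i) + i * d) + 1) + 1) ≤ (m + n + 1) * 2 ^ n * (d + 1) ^ (m + 1) := by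
  have h2 := two_pow_ge n
  have step1 : n * d ^ i * (n + (h + ((n - i) + i * d) + 1) + 1) ≤
      n * d ^ i * ((i + 1) * d + (2 * n + 2)) := by
    refine Nat.mul_le_mul_left _ ?_
    have : n - i ≤ n := Nat.sub_le _ _
    nlinarith
  refine step1.trans ?_
  have hb : d ^ (i + 1) + (i + 1) * d ^ i ≤ (d + 1) ^ (i + 1) := by
    rcases hdi with h | h
    · clear step1 h2 hin him hh
      induction i with
      | zero => simp
      | succ i ih =>
        have : (d + 1) ^ (i + 1 + 1) = (d + 1) ^ (i + 1) * (d + 1) := pow_succ _ _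
        rw [this]
        calc d ^ (i + 1 + 1) + (i + 1 + 1) * d ^ (i + 1) ≤ (d ^ (i + 1) + (i + 1) * d ^ i) * (d + 1) := by
              have e1 : d ^ (i + 1 + 1) = d ^ i * d * d := by ring
              have e2 : d ^ (i + 1) = d ^ i * d := by ring
              rw [e1, e2]
              nlinarith [Nat.zero_le ((i + 1) * d ^ i)]
          _ ≤ _ := Nat.mul_le_mul_right _ ih
    · subst h; simp
  have step3 : (n + 1) * 2 ^ n * (d + 1) ^ (i + 1) ≤ (m + n + 1) * 2 ^ n * (d + 1) ^ (m + 1) := by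
    refine Nat.mul_le_mul (Nat.mul_le_mul_right _ (by omega)) ?_
    exact Nat.pow_le_pow_right (by omega) (by omega)
  refine le_trans ?_ step3
  refine le_trans ?_ (Nat.mul_le_mul_left _ hb)
  have e : d ^ (i + 1) = d ^ i * d := pow_succ _ _
  rw [e]
  have key : n * ((i + 1) * d + (2 * n + 2)) ≤ (n + 1) * 2 ^ n * (d + (i + 1)) := by
    have h1 : n * (i + 1) ≤ (n + 1) * 2 ^ n := Nat.mul_le_mul (by omega) (by omega)
    have h3 : 2 * n ≤ 2 ^ n := by
      clear * -
      induction n with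
      | zero => simp
      | succ n ih =>
        have := two_pow_ge n
        rw [pow_succ]
        omega
    have h4 : n * (2 * n + 2) ≤ (n + 1) * 2 ^ n := by
      calc n * (2 * n + 2) = (n + 1) * (2 * n) := by ring
        _ ≤ _ := Nat.mul_le_mul_left _ h3
    calc n * ((i + 1) * d + (2 * n + 2)) = n * (i + 1) * d + n * (2 * n + 2) * 1 := by ring
      _ ≤ (n + 1) * 2 ^ n * d + (n + 1) * 2 ^ n * (i + 1) :=
        Nat.add_le_add (Nat.mul_le_mul_right _ h1) (Nat.mul_le_mul h4 (by omega))
      _ = _ := by ring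
  calc n * d ^ i * ((i + 1) * d + (2 * n + 2)) = d ^ i * (n * ((i + 1) * d + (2 * n + 2))) := by ring
    _ ≤ d ^ i * ((n + 1) * 2 ^ n * (d + (i + 1))) := Nat.mul_le_mul_left _ key
    _ = _ := by ring
end PDeg
end Concrete

/-- **Proposition A.9** (explicit construction of projective degrees).
Let `k` be an algebraically closed field of characteristic `0` or `> d^n`, let
`F_0, …, F_m` be homogeneous of common degree `d` in `k[X_0,…,X_n]` with `F_0 ≠ 0`, and let
`i ≤ min(m,n)`.  Then there is a nonzero polynomial `P` in the variables `L, L̂`, of total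
degree at most `(m+n+1)·2^n·(d+1)^(m+1)`, and a natural number `g_i`, such that whenever
`P(ℓ, ℓ̂) ≠ 0`, the set of points `x ∈ ℙ^n(k)` satisfying the `n-i` linear equations
`ℓ_j(x) = 0`, the `i` equations `ℓ̂_{j,0}F_0(x) + ⋯ + ℓ̂_{j,m}F_m(x) = 0` and
`x ∉ V(F_0,…,F_m)` is finite with exactly `g_i` elements, and all its points
satisfy `x_0 ≠ 0`. -/
theorem projective_degree_explicit
    (k : Type*) [Field k] [IsAlgClosed k]
    (n m d : ℕ)
    (hchar : ringChar k = 0 ∨ d ^ n < ringChar k)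
    (F : Fin (m + 1) → MvPolynomial (Fin (n + 1)) k)
    (hFhom : ∀ j, (F j).IsHomogeneous d)
    (hF0 : F 0 ≠ 0)
    (i : ℕ) (him : i ≤ m) (hin : i ≤ n) :
    ∃ (P : MvPolynomial ((Fin (n - i) × Fin (n + 1)) ⊕ (Fin i × Fin (m + 1))) k) (g : ℕ),
      P ≠ 0 ∧
      P.totalDegree ≤ (m + n + 1) * 2 ^ n * (d + 1) ^ (m + 1) ∧
      ∀ (l : Fin (n - i) → Fin (n + 1) → k) (lhat : Fin i → Fin (m + 1) → k),
        MvPolynomial.eval (Sum.elim (fun p => l p.1 p.2) (fun p => lhat p.1 p.2)) P ≠ 0 →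
        let S : Set (Projectivization k (Fin (n + 1) → k)) :=
          {x | (∀ j : Fin (n - i), ∑ t, l j t * x.rep t = 0) ∧
               (∀ j : Fin i, ∑ t, lhat j t * MvPolynomial.eval x.rep (F t) = 0) ∧
               ¬ (∀ t : Fin (m + 1), MvPolynomial.eval x.rep (F t) = 0)}
        S.Finite ∧ S.ncard = g ∧ ∀ x ∈ S, x.rep 0 ≠ 0 := by
  by_cases hdi : 1 ≤ d ∨ i = 0
  · have : Infinite k := IsAlgClosed.instInfinite
    have hc : ∀ N : ℕ, 1 ≤ N → N ≤ (PDeg.sys F hFhom hF0 hin hdi).Δ → (N : k) ≠ 0 := by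
      intro N h1 h2 h0
      rw [PDeg.sys_Δ] at h2
      have hdv := (ringChar.spec k N).1 h0
      rcases hdi with hd | hi
      · rcases hchar with h | h
        · rw [h, zero_dvd_iff] at hdv
          omega
        · have h3 := Nat.le_of_dvd h1 hdv
          have h4 : d ^ i ≤ d ^ n := Nat.pow_le_pow_right hd hin
          omega
      · subst hi
        have : N = 1 := by
          rw [pow_zero] at h2
          omega
        subst this
        simp at h0
    obtain ⟨P, g, hP, hdeg, h⟩ :=
      Sys.main_sys (PDeg.sys F hFhom hF0 hin hdi) (PDeg.sys_hd F hFhom hF0 hin hdi) hc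
    refine ⟨P, g, hP, ?_, ?_⟩
    · rw [PDeg.sys_Δ, PDeg.sys_sumD] at hdeg
      exact hdeg.trans (PDeg.deg_arith n m d i _ him hin hdi (PDeg.sys_h F hFhom hF0 hin hdi))
    · intro l lhat hne S
      refine h _ hne S ?_ ?_
      · intro x hx
        refine (PDeg.hpt_iff F hFhom hF0 hin hdi l lhat x.rep x.rep_nonzero).2
          ⟨hx.1, hx.2.1, fun _ => not_forall.1 hx.2.2⟩
      · intro x hx hx0
        have h1 := (PDeg.hpt_iff F hFhom hF0 hin hdi l lhat x.rep x.rep_nonzero).1 hx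
        exact ⟨h1.1, h1.2.1, fun hall => hx0 (hall 0)⟩
  · have hd : d = 0 := by omega
    have hi : 0 < i := by omega
    subst hd
    have hF : ∀ t, F t = MvPolynomial.C (MvPolynomial.coeff 0 (F t)) := fun t =>
      MvPolynomial.totalDegree_eq_zero_iff_eq_C.1 (Nat.le_zero.1 (hFhom t).totalDegree_le)
    have hev : ∀ (t) (x : Fin (n + 1) → k), MvPolynomial.eval x (F t) = MvPolynomial.coeff 0 (F t) := by
      intro t x
      conv_lhs => rw [hF t]
      exact MvPolynomial.eval_C _
    refine ⟨∑ t, MvPolynomial.C (MvPolynomial.coeff 0 (F t)) *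
      MvPolynomial.X (Sum.inr (⟨0, hi⟩, t)), 0, ?_, ?_, ?_⟩
    · intro h
      have h1 := congrArg (MvPolynomial.eval (Sum.elim (fun _ => (0 : k))
        (fun p => if p.2 = 0 then 1 else 0))) h
      simp only [map_sum, map_mul, MvPolynomial.eval_C, MvPolynomial.eval_X, Sum.elim_inr,
        map_zero, mul_ite, mul_one, mul_zero, Finset.sum_ite_eq', Finset.mem_univ, if_true] at h1
      apply hF0
      rw [hF 0, h1, map_zero]
    · refine le_trans (MvPolynomial.totalDegree_finsetSum_le (d := 1) ?_) ?_
      · intro t _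
        refine (MvPolynomial.totalDegree_mul _ _).trans ?_
        simp
      · exact Nat.one_le_iff_ne_zero.2 (by positivity)
    · intro l lhat hne S
      have hS : S = ∅ := by
        rw [Set.eq_empty_iff_forall_notMem]
        intro x hx
        apply hne
        have h2 := hx.2.1 ⟨0, hi⟩
        simp only [hev] at h2
        rw [← h2]
        simp only [map_sum, map_mul, MvPolynomial.eval_C, MvPolynomial.eval_X, Sum.elim_inr]
        exact Finset.sum_congr rfl fun t _ => mul_comm _ _
      rw [hS]
      simp
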